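/- arXiv:1710.10892 — 7 statements merged into one kernel-verified Lean document; each statement's English description precedes it below -/
import Mathlib

section
/- Let s = (s_1,…,s_n) be a sequence of positive integers such that the s-lecture hall polytope P_n^(s) is level, and for each k ≥ 0 let h_k = #I_{n,k}^(s) (so h_0 = 1). Then h_i ≤ h_j·h_{i+j} for all pairs of indices i, j with h_{i+j} > 0. -/
open scoped BigOperators

noncomputable section

/-- The `s`-lecture hall polytope
`P_n^(s) = { x ∈ ℝ^n : 0 ≤ x_1/s_1 ≤ x_2/s_2 ≤ ⋯ ≤ x_n/s_n ≤ 1 }` (indices 0-based in Lean). -/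
def lhp (n : ℕ) (s : Fin n → ℤ) : Set (Fin n → ℝ) :=
  {x | (∀ i : Fin n, (i : ℕ) = 0 → 0 ≤ x i / (s i : ℝ)) ∧
       (∀ i j : Fin n, (j : ℕ) = (i : ℕ) + 1 → x i / (s i : ℝ) ≤ x j / (s j : ℝ)) ∧
       (∀ i : Fin n, (i : ℕ) = n - 1 → x i / (s i : ℝ) ≤ 1)}

/-- The vertex `(0,…,0,s_i,s_{i+1},…,s_n)` of the lecture hall polytope (real version). -/
def lhpVertexR (n : ℕ) (s : Fin n → ℤ) (i : Fin n) : Fin n → ℝ :=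
  fun j => if i ≤ j then (s j : ℝ) else 0

/-- The vertex `(0,…,0,s_i,s_{i+1},…,s_n)` of the lecture hall polytope (integer version). -/
def lhpVertexZ (n : ℕ) (s : Fin n → ℤ) (i : Fin n) : Fin n → ℤ :=
  fun j => if i ≤ j then s j else 0

/-- `cone(P_n^(s)) = span_{ℝ≥0} { (v,1) : v a vertex of P_n^(s) } ⊆ ℝ^{n+1}`:
the set of nonnegative combinations of `(0,1)` and the `(v_i,1)`. -/
def lhpCone (n : ℕ) (s : Fin n → ℤ) : Set (Fin (n + 1) → ℝ) :=
  {x | ∃ (a : ℝ) (b : Fin n → ℝ), 0 ≤ a ∧ (∀ i, 0 ≤ b i) ∧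
      x = a • (Fin.snoc (0 : Fin n → ℝ) 1 : Fin (n + 1) → ℝ) +
        ∑ i : Fin n, b i • (Fin.snoc (lhpVertexR n s i) 1 : Fin (n + 1) → ℝ)}

/-- Lattice points of `cone(P_n^(s))`. -/
def lhpConeZ (n : ℕ) (s : Fin n → ℤ) : Set (Fin (n + 1) → ℤ) :=
  {x | (fun i => (x i : ℝ)) ∈ lhpCone n s}

/-- Lattice points of the (relative) interior of `cone(P_n^(s))`
(the cone is full-dimensional, so the relative interior is the interior). -/
def lhpConeInteriorZ (n : ℕ) (s : Fin n → ℤ) : Set (Fin (n + 1) → ℤ) :=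
  {x | (fun i => (x i : ℝ)) ∈ interior (lhpCone n s)}

/-- `P_n^(s)` is Gorenstein: some integer point `c` satisfies
`c + (cone(P) ∩ ℤ^{n+1}) = cone(P)° ∩ ℤ^{n+1}`. -/
def IsGorenstein (n : ℕ) (s : Fin n → ℤ) : Prop :=
  ∃ c : Fin (n + 1) → ℤ,
    (fun x => c + x) '' lhpConeZ n s = lhpConeInteriorZ n s

/-- `P_n^(s)` is level: finitely many integer points `c_1,…,c_m`, all with the same
last coordinate, satisfy `⋃ (c_i + (cone(P) ∩ ℤ^{n+1})) = cone(P)° ∩ ℤ^{n+1}`. -/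
def IsLevel (n : ℕ) (s : Fin n → ℤ) : Prop :=
  ∃ C : Finset (Fin (n + 1) → ℤ), C.Nonempty ∧
    (∀ c ∈ C, ∀ c' ∈ C, c (Fin.last n) = c' (Fin.last n)) ∧
    (⋃ c ∈ C, (fun x => c + x) '' lhpConeZ n s) = lhpConeInteriorZ n s

/-- The `t`-lecture hall cone `C_m^(t) = { x ∈ ℝ^m : 0 ≤ x_1/t_1 ≤ ⋯ ≤ x_m/t_m }`. -/
def lhCone (m : ℕ) (t : Fin m → ℤ) : Set (Fin m → ℝ) :=
  {x | (∀ i : Fin m, (i : ℕ) = 0 → 0 ≤ x i / (t i : ℝ)) ∧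
       (∀ i j : Fin m, (j : ℕ) = (i : ℕ) + 1 → x i / (t i : ℝ) ≤ x j / (t j : ℝ))}

/-- `e` is an `s`-inversion sequence: `0 ≤ e_i < s_i` for all `i`. -/
def IsInvSeq (n : ℕ) (s : Fin n → ℤ) (e : Fin n → ℤ) : Prop :=
  ∀ i, 0 ≤ e i ∧ e i < s i

/-- The ratio `e_i / s_i` as a rational number. -/
def invRatio (n : ℕ) (s e : Fin n → ℤ) (i : Fin n) : ℚ := (e i : ℚ) / (s i : ℚ)

/-- The ratio `e_{i-1}/s_{i-1}`, with the convention `e_0 = 0`, `s_0 = 1`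
(paper 1-based indexing; here 0-based). -/
def prevRatio (n : ℕ) (s e : Fin n → ℤ) (i : Fin n) : ℚ :=
  if (i : ℕ) = 0 then 0
  else invRatio n s e ⟨(i : ℕ) - 1, lt_of_le_of_lt (Nat.sub_le _ _) i.isLt⟩

/-- The ascent set `Asc(e) ⊆ {0,…,n-1}` of an inversion sequence. -/
def ascSet (n : ℕ) (s e : Fin n → ℤ) : Finset (Fin n) :=
  Finset.univ.filter fun i => prevRatio n s e i < invRatio n s e i

/-- The number of ascents of an inversion sequence. -/
def asc (n : ℕ) (s e : Fin n → ℤ) : ℕ := (ascSet n s e).card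

/-- Addition of inversion sequences: componentwise mod `s_i`,
with representative in `{0,…,s_i - 1}`. -/
def invAdd (n : ℕ) (s : Fin n → ℤ) (e e' : Fin n → ℤ) : Fin n → ℤ :=
  fun i => (e i + e' i) % s i

/-- `hStar n s k = # I_{n,k}^(s)`, the number of `s`-inversion sequences with `k` ascents
(the `k`-th coefficient of the `s`-Eulerian polynomial). -/
def hStar (n : ℕ) (s : Fin n → ℤ) (k : ℕ) : ℕ :=
  Nat.card {e : Fin n → ℤ // IsInvSeq n s e ∧ asc n s e = k}

/-- `s` is `u`-generated by a sequence `u` of positive integers: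
`s_2 = u_1 s_1 - 1` and `s_{i+1} = u_i s_i - s_{i-1}` for `i > 1`. -/
def IsUGenerated (n : ℕ) (s : Fin n → ℤ) : Prop :=
  ∃ u : Fin n → ℤ,
    (∀ i : Fin n, (i : ℕ) < n - 1 → 0 < u i) ∧
    (∀ k j : Fin n, (j : ℕ) = (k : ℕ) + 1 → (k : ℕ) = 0 → s j = u k * s k - 1) ∧
    (∀ a k j : Fin n, (k : ℕ) = (a : ℕ) + 1 → (j : ℕ) = (k : ℕ) + 1 →
      s j = u k * s k - s a)

/-- The (half-open) fundamental parallelepiped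
`Π = { Σ η_i (v_i,1) : 0 ≤ η_i < 1 }` of `P_n^(s)`. -/
def fpp (n : ℕ) (s : Fin n → ℤ) : Set (Fin (n + 1) → ℝ) :=
  {x | ∃ (a : ℝ) (b : Fin n → ℝ),
      (0 ≤ a ∧ a < 1) ∧ (∀ i, 0 ≤ b i ∧ b i < 1) ∧
      x = a • (Fin.snoc (0 : Fin n → ℝ) 1 : Fin (n + 1) → ℝ) +
        ∑ i : Fin n, b i • (Fin.snoc (lhpVertexR n s i) 1 : Fin (n + 1) → ℝ)}

/-- The lattice point `λ(e) ∈ ℤ^{n+1}` associated to an inversion sequence `e`: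
`λ(e)_j = ℓ_j s_j - e_j` with `ℓ_j = #(Asc(e) ∩ {0,…,j-1})` (paper 1-based `j`),
and last coordinate `asc(e)`. -/
def lamOf (n : ℕ) (s : Fin n → ℤ) (e : Fin n → ℤ) : Fin (n + 1) → ℤ :=
  Fin.snoc
    (fun j : Fin n =>
      (((ascSet n s e).filter fun i : Fin n => (i : ℕ) ≤ (j : ℕ)).card : ℤ) * s j - e j)
    (asc n s e : ℤ)

/-- A coefficient sequence `h` (of a polynomial `Σ h_j z^j` of degree `r`) is palindromic:
`h_r ≠ 0`, `h_k = 0` for `k > r`, and `h_j = h_{r-j}` for `0 ≤ j ≤ r`. -/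
def IsPalindromic (h : ℕ → ℕ) : Prop :=
  ∃ r : ℕ, h r ≠ 0 ∧ (∀ k, r < k → h k = 0) ∧ ∀ j, j ≤ r → h j = h (r - j)

end

/-- Extended ratio sequence: `R 0 = 0`, `R (m+1) = x_m / s_m`, `R (n+1) = x_last`. -/
noncomputable def RR (n : ℕ) (s : Fin n → ℤ) (x : Fin (n + 1) → ℝ) : ℕ → ℝ
  | 0 => 0
  | m + 1 => if h : m < n then x (Fin.castSucc ⟨m, h⟩) / (s ⟨m, h⟩ : ℝ) else x (Fin.last n)

noncomputable def RZ (n : ℕ) (s : Fin n → ℤ) (x : Fin (n + 1) → ℤ) (m : ℕ) : ℝ :=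
  RR n s (fun i => (x i : ℝ)) m

lemma RR_zero (n : ℕ) (s : Fin n → ℤ) (x : Fin (n + 1) → ℝ) : RR n s x 0 = 0 := rfl

lemma RR_succ (n : ℕ) (s : Fin n → ℤ) (x : Fin (n + 1) → ℝ) (i : Fin n) :
    RR n s x ((i : ℕ) + 1) = x i.castSucc / (s i : ℝ) := by
  simp [RR]

lemma RR_last (n : ℕ) (s : Fin n → ℤ) (x : Fin (n + 1) → ℝ) :
    RR n s x (n + 1) = x (Fin.last n) := by
  simp [RR]

lemma RR_add (n : ℕ) (s : Fin n → ℤ) (x y : Fin (n + 1) → ℝ) (m : ℕ) :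
    RR n s (x + y) m = RR n s x m + RR n s y m := by
  cases m with
  | zero => simp [RR]
  | succ m => simp only [RR]; split_ifs <;> simp [add_div]

lemma RR_smul (n : ℕ) (s : Fin n → ℤ) (c : ℝ) (x : Fin (n + 1) → ℝ) (m : ℕ) :
    RR n s (c • x) m = c * RR n s x m := by
  cases m with
  | zero => simp [RR]
  | succ m => simp only [RR]; split_ifs <;> simp [mul_div_assoc]

lemma RR_sum (n : ℕ) (s : Fin n → ℤ) {ι : Type} (t : Finset ι) (f : ι → Fin (n + 1) → ℝ) (m : ℕ) :
    RR n s (∑ i ∈ t, f i) m = ∑ i ∈ t, RR n s (f i) m := by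
  classical
  induction t using Finset.induction_on with
  | empty =>
    have := RR_smul n s 0 0 m
    simpa using this
  | insert a t ha ih => rw [Finset.sum_insert ha, Finset.sum_insert ha, RR_add, ih]

lemma RR_cont (n : ℕ) (s : Fin n → ℤ) (m : ℕ) : Continuous fun x => RR n s x m := by
  cases m with
  | zero => simpa [RR] using continuous_const
  | succ m =>
    simp only [RR]; split_ifs
    · exact (continuous_apply _).div_const _
    · exact continuous_apply _

lemma cases_le {n m : ℕ} (h : m ≤ n + 1) :
    m = 0 ∨ (∃ i : Fin n, m = (i : ℕ) + 1) ∨ m = n + 1 := by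
  rcases m with _ | m
  · exact Or.inl rfl
  · by_cases hm : m < n
    · exact Or.inr (Or.inl ⟨⟨m, hm⟩, rfl⟩)
    · right; right; omega

lemma RR_apex (n : ℕ) (s : Fin n → ℤ) (m : ℕ) (hm : m ≤ n + 1) :
    RR n s (Fin.snoc (0 : Fin n → ℝ) 1 : Fin (n + 1) → ℝ) m = if m = n + 1 then 1 else 0 := by
  rcases cases_le hm with rfl | ⟨i, rfl⟩ | rfl
  · simp [RR]
  · rw [RR_succ]; have := i.isLt; rw [if_neg (by omega)]; simp
  · rw [RR_last]; simp

lemma RR_vert (n : ℕ) (s : Fin n → ℤ) (hs : ∀ i, 0 < s i) (k : Fin n) (m : ℕ) (hm : m ≤ n + 1) :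
    RR n s (Fin.snoc (lhpVertexR n s k) 1 : Fin (n + 1) → ℝ) m = if (k : ℕ) < m then 1 else 0 := by
  rcases cases_le hm with rfl | ⟨i, rfl⟩ | rfl
  · simp [RR]
  · rw [RR_succ]
    have h0 : (s i : ℝ) ≠ 0 := by exact_mod_cast (hs i).ne'
    simp only [Fin.snoc_castSucc, lhpVertexR, Fin.le_def, Nat.lt_succ_iff]
    split_ifs <;> simp [h0]
  · rw [RR_last]; have := k.isLt
    rw [if_pos (by omega)]; simp

lemma cone_iff (n : ℕ) (s : Fin n → ℤ) (hs : ∀ i, 0 < s i) (x : Fin (n + 1) → ℝ) :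
    x ∈ lhpCone n s ↔ ∀ m ≤ n, RR n s x m ≤ RR n s x (m + 1) := by
  constructor
  · rintro ⟨a, b, ha, hb, rfl⟩ m hm
    simp only [RR_add, RR_smul, RR_sum]
    rw [RR_apex n s m (by omega), RR_apex n s (m + 1) (by omega)]
    refine add_le_add (mul_le_mul_of_nonneg_left ?_ ha) (Finset.sum_le_sum fun i _ => ?_)
    · rw [if_neg (by omega)]; split_ifs <;> norm_num
    · rw [RR_vert n s hs i m (by omega), RR_vert n s hs i (m + 1) (by omega)]
      refine mul_le_mul_of_nonneg_left ?_ (hb i)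
      split_ifs <;> first | omega | norm_num
  · intro h
    refine ⟨RR n s x (n + 1) - RR n s x n,
      fun i => RR n s x ((i : ℕ) + 1) - RR n s x i, by linarith [h n le_rfl],
      fun i => by linarith [h i (by omega)], ?_⟩
    funext j
    refine Fin.lastCases ?_ (fun j => ?_) j
    · simp only [Pi.add_apply, Pi.smul_apply, Finset.sum_apply, Fin.snoc_last, smul_eq_mul, mul_one]
      rw [Fin.sum_univ_eq_sum_range (fun i => RR n s x (i + 1) - RR n s x i) n,
        Finset.sum_range_sub, RR_zero, RR_last]
      ring
    · have h0 : (s j : ℝ) ≠ 0 := by exact_mod_cast (hs j).ne'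
      simp only [Pi.add_apply, Pi.smul_apply, Finset.sum_apply, Fin.snoc_castSucc, smul_eq_mul,
        lhpVertexR, Pi.zero_apply, mul_zero, zero_add, Fin.le_def]
      rw [Fin.sum_univ_eq_sum_range
        (fun i => (RR n s x (i + 1) - RR n s x i) * (if i ≤ (j : ℕ) then (s j : ℝ) else 0)) n]
      have : ∑ i ∈ Finset.range n,
          (RR n s x (i + 1) - RR n s x i) * (if i ≤ (j : ℕ) then (s j : ℝ) else 0)
          = ∑ i ∈ Finset.range ((j : ℕ) + 1), (RR n s x (i + 1) - RR n s x i) * (s j : ℝ) := by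
        symm
        have hj := j.isLt
        apply Finset.sum_subset_zero_on_sdiff
        · intro i; simp only [Finset.mem_range]; omega
        · intro i hi
          simp only [Finset.mem_sdiff, Finset.mem_range] at hi
          rw [if_neg (by omega), mul_zero]
        · intro i hi
          simp only [Finset.mem_range] at hi
          rw [if_pos (by omega)]
      rw [this, ← Finset.sum_mul, Finset.sum_range_sub, RR_zero, RR_succ]
      field_simp
      ring

/-- The sum of all generators. -/
def VV (n : ℕ) (s : Fin n → ℤ) : Fin (n + 1) → ℤ :=
  Fin.snoc (fun j : Fin n => ((j : ℤ) + 1) * s j) ((n : ℤ) + 1)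

lemma RZ_VV (n : ℕ) (s : Fin n → ℤ) (hs : ∀ i, 0 < s i) (m : ℕ) (hm : m ≤ n + 1) :
    RZ n s (VV n s) m = m := by
  unfold RZ
  rcases cases_le hm with rfl | ⟨i, rfl⟩ | rfl
  · simp [RR]
  · rw [RR_succ]
    have h0 : (s i : ℝ) ≠ 0 := by exact_mod_cast (hs i).ne'
    simp [VV]; field_simp
  · rw [RR_last]; simp [VV]

lemma interior_iff (n : ℕ) (s : Fin n → ℤ) (hs : ∀ i, 0 < s i) (x : Fin (n + 1) → ℝ) :
    x ∈ interior (lhpCone n s) ↔ ∀ m ≤ n, RR n s x m < RR n s x (m + 1) := by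
  constructor
  · intro h
    set w : Fin (n + 1) → ℝ := fun i => (VV n s i : ℝ) with hw
    have hwm : ∀ m ≤ n + 1, RR n s w m = m := fun m hm => RZ_VV n s hs m hm
    have hc : Continuous fun ε : ℝ => x + (-ε) • w := by fun_prop
    have hn : (fun ε : ℝ => x + (-ε) • w) ⁻¹' interior (lhpCone n s) ∈ nhds (0 : ℝ) :=
      (isOpen_interior.preimage hc).mem_nhds (by simpa using h)
    obtain ⟨δ, hδ, hb⟩ := Metric.mem_nhds_iff.1 hn
    have h2 : δ / 2 ∈ Metric.ball (0 : ℝ) δ := by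
      simp [abs_of_pos hδ]; linarith
    have h3 := (cone_iff n s hs _).1 (interior_subset (hb h2))
    intro m hm
    have h4 := h3 m hm
    simp only [RR_add, RR_smul] at h4
    rw [hwm m (by omega), hwm (m + 1) (by omega)] at h4
    push_cast at h4
    nlinarith
  · intro h
    have ho : IsOpen {y : Fin (n + 1) → ℝ | ∀ m ∈ Finset.range (n + 1),
        RR n s y m < RR n s y (m + 1)} := by
      have : {y : Fin (n + 1) → ℝ | ∀ m ∈ Finset.range (n + 1),
        RR n s y m < RR n s y (m + 1)} = ⋂ m ∈ Finset.range (n + 1),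
          {y | RR n s y m < RR n s y (m + 1)} := by ext; simp
      rw [this]
      exact isOpen_biInter_finset fun m _ => isOpen_lt (RR_cont n s m) (RR_cont n s (m + 1))
    refine interior_maximal ?_ ho ?_
    · intro y hy
      exact (cone_iff n s hs y).2 fun m hm => (hy m (Finset.mem_range.2 (by omega))).le
    · intro m hm
      exact h m (by have := Finset.mem_range.1 hm; omega)

lemma RZ_zero (n : ℕ) (s : Fin n → ℤ) (x : Fin (n + 1) → ℤ) : RZ n s x 0 = 0 := rfl

lemma RZ_succ (n : ℕ) (s : Fin n → ℤ) (x : Fin (n + 1) → ℤ) (i : Fin n) :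
    RZ n s x ((i : ℕ) + 1) = (x i.castSucc : ℝ) / (s i : ℝ) := RR_succ n s _ i

lemma RZ_last (n : ℕ) (s : Fin n → ℤ) (x : Fin (n + 1) → ℤ) :
    RZ n s x (n + 1) = x (Fin.last n) := RR_last n s _

lemma RZ_add (n : ℕ) (s : Fin n → ℤ) (x y : Fin (n + 1) → ℤ) (m : ℕ) :
    RZ n s (x + y) m = RZ n s x m + RZ n s y m := by
  unfold RZ; rw [← RR_add]; congr 1; funext i; simp

lemma RZ_sub (n : ℕ) (s : Fin n → ℤ) (x y : Fin (n + 1) → ℤ) (m : ℕ) :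
    RZ n s (x - y) m = RZ n s x m - RZ n s y m := by
  have := RZ_add n s (x - y) y m
  rw [sub_add_cancel] at this; linarith

/-- Membership in the half-open parallelepiped. -/
def InPi (n : ℕ) (s : Fin n → ℤ) (x : Fin (n + 1) → ℤ) : Prop :=
  ∀ m ≤ n, RZ n s x m ≤ RZ n s x (m + 1) ∧ RZ n s x (m + 1) < RZ n s x m + 1

/-- Extended ratio sequence of an inversion sequence. -/
noncomputable def RE (n : ℕ) (s e : Fin n → ℤ) (m : ℕ) : ℝ :=
  RZ n s (Fin.snoc e 0 : Fin (n + 1) → ℤ) m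

lemma RE_succ (n : ℕ) (s e : Fin n → ℤ) (i : Fin n) :
    RE n s e ((i : ℕ) + 1) = (e i : ℝ) / (s i : ℝ) := by
  unfold RE; rw [RZ_succ]; simp

lemma RE_last (n : ℕ) (s e : Fin n → ℤ) : RE n s e (n + 1) = 0 := by
  unfold RE; rw [RZ_last]; simp

lemma RE_bd (n : ℕ) (s e : Fin n → ℤ) (he : IsInvSeq n s e) (m : ℕ) (hm : m ≤ n + 1) :
    0 ≤ RE n s e m ∧ RE n s e m < 1 := by
  rcases cases_le hm with rfl | ⟨i, rfl⟩ | rfl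
  · simp [RE, RZ_zero]
  · rw [RE_succ]
    have h1 : (0 : ℝ) ≤ e i := by exact_mod_cast (he i).1
    have h2 : (e i : ℝ) < s i := by exact_mod_cast (he i).2
    exact ⟨div_nonneg h1 (by linarith), (div_lt_one (by linarith)).2 h2⟩
  · rw [RE_last]; norm_num

lemma mem_asc (n : ℕ) (s e : Fin n → ℤ) (i : Fin n) :
    i ∈ ascSet n s e ↔ RE n s e i < RE n s e ((i : ℕ) + 1) := by
  have h1 : RE n s e ((i : ℕ) + 1) = ((invRatio n s e i : ℚ) : ℝ) := by
    rw [RE_succ]; simp [invRatio]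
  have h2 : RE n s e i = ((prevRatio n s e i : ℚ) : ℝ) := by
    unfold prevRatio
    obtain ⟨i, hi⟩ := i
    rcases i with _ | k
    · simp [RE, RZ_zero]
    · have := RE_succ n s e ⟨k, by omega⟩
      simp only at this
      simp [this, invRatio]
  rw [h1, h2, Rat.cast_lt]; simp [ascSet]

def LL (n : ℕ) (s e : Fin n → ℤ) (m : ℕ) : ℕ :=
  ((ascSet n s e).filter fun i : Fin n => (i : ℕ) < m).card

lemma LL_zero (n : ℕ) (s e : Fin n → ℤ) : LL n s e 0 = 0 := by simp [LL]

lemma LL_last (n : ℕ) (s e : Fin n → ℤ) : LL n s e (n + 1) = asc n s e := by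
  unfold LL asc; congr 1; apply Finset.filter_true_of_mem; intro i _; omega

open Classical in
lemma LL_succ (n : ℕ) (s e : Fin n → ℤ) (he : IsInvSeq n s e) (m : ℕ) (hm : m ≤ n) :
    LL n s e (m + 1) = LL n s e m + if RE n s e m < RE n s e (m + 1) then 1 else 0 := by
  rcases hm.lt_or_eq with h | rfl
  · have hiff := mem_asc n s e ⟨m, h⟩
    simp only at hiff
    unfold LL
    by_cases hc : (⟨m, h⟩ : Fin n) ∈ ascSet n s e
    · rw [if_pos (hiff.1 hc), ← Finset.card_insert_of_notMem (a := (⟨m, h⟩ : Fin n)) (by simp)]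
      congr 1
      ext i
      simp only [Finset.mem_filter, Finset.mem_insert, Fin.ext_iff]
      constructor
      · rintro ⟨h1, h2⟩
        by_cases h3 : (i : ℕ) = m
        · exact Or.inl h3
        · exact Or.inr ⟨h1, by omega⟩
      · rintro (h1 | ⟨h1, h2⟩)
        · have : i = ⟨m, h⟩ := Fin.ext h1
          subst this; exact ⟨hc, by simp⟩
        · exact ⟨h1, by omega⟩
    · rw [if_neg (fun h' => hc (hiff.2 h')), add_zero]
      congr 1
      ext i
      simp only [Finset.mem_filter]
      constructor
      · rintro ⟨h1, h2⟩
        refine ⟨h1, ?_⟩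
        by_contra h3
        have : i = ⟨m, h⟩ := Fin.ext (by simp; omega)
        subst this; exact hc h1
      · rintro ⟨h1, h2⟩; exact ⟨h1, by omega⟩
  · rw [if_neg, add_zero]
    · unfold LL; congr 1
      apply Finset.filter_congr
      intro i _; have := i.isLt; omega
    · rw [RE_last, not_lt]; exact (RE_bd m s e he m (by omega)).1

lemma RZ_lam (n : ℕ) (s e : Fin n → ℤ) (hs : ∀ i, 0 < s i) (m : ℕ) (hm : m ≤ n + 1) :
    RZ n s (lamOf n s e) m = LL n s e m - RE n s e m := by
  rcases cases_le hm with rfl | ⟨i, rfl⟩ | rfl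
  · simp [RE, RZ_zero, LL_zero]
  · have h0 : (s i : ℝ) ≠ 0 := by exact_mod_cast (hs i).ne'
    rw [RZ_succ, RE_succ]
    simp only [lamOf, Fin.snoc_castSucc, LL, Nat.lt_succ_iff]
    push_cast
    field_simp
  · rw [RZ_last, RE_last, LL_last]; simp [lamOf]

lemma lam_inPi (n : ℕ) (s e : Fin n → ℤ) (hs : ∀ i, 0 < s i) (he : IsInvSeq n s e) :
    InPi n s (lamOf n s e) := by
  intro m hm
  rw [RZ_lam n s e hs m (by omega), RZ_lam n s e hs (m + 1) (by omega), LL_succ n s e he m hm]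
  have h1 := RE_bd n s e he m (by omega)
  have h2 := RE_bd n s e he (m + 1) (by omega)
  split_ifs with h <;> push_cast
  · constructor <;> linarith
  · push Not at h
    constructor <;> linarith

/-- Inversion sequence of a lattice point. -/
def GG (n : ℕ) (s : Fin n → ℤ) (x : Fin (n + 1) → ℤ) : Fin n → ℤ :=
  fun i => (-x i.castSucc) % s i

lemma GG_inv (n : ℕ) (s : Fin n → ℤ) (hs : ∀ i, 0 < s i) (x : Fin (n + 1) → ℤ) :
    IsInvSeq n s (GG n s x) :=
  fun i => ⟨Int.emod_nonneg _ (hs i).ne', Int.emod_lt_of_pos _ (hs i)⟩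

lemma GG_asc (n : ℕ) (s : Fin n → ℤ) (hs : ∀ i, 0 < s i) (x : Fin (n + 1) → ℤ)
    (hx : InPi n s x) : (asc n s (GG n s x) : ℤ) = x (Fin.last n) := by
  have hinv := GG_inv n s hs x
  have hex : ∀ m, ∃ l : ℤ, m ≤ n + 1 → RZ n s x m = l - RE n s (GG n s x) m := by
    intro m
    by_cases hm : m ≤ n + 1
    · rcases cases_le hm with rfl | ⟨i, rfl⟩ | rfl
      · exact ⟨0, fun _ => by simp [RE, RZ_zero]⟩
      · refine ⟨-((-x i.castSucc) / s i), fun _ => ?_⟩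
        have h0 : (s i : ℝ) ≠ 0 := by exact_mod_cast (hs i).ne'
        rw [RZ_succ, RE_succ]
        have h1 := Int.emod_add_mul_ediv (-x i.castSucc) (s i)
        have h2 : (x i.castSucc : ℝ) = -((-x i.castSucc) / s i : ℤ) * s i - GG n s x i := by
          have : x i.castSucc = -((-x i.castSucc) / s i) * s i - GG n s x i := by
            unfold GG; linarith
          exact_mod_cast this
        rw [h2]; push_cast; field_simp
      · exact ⟨x (Fin.last n), fun _ => by rw [RZ_last, RE_last]; simp⟩
    · exact ⟨0, fun h => absurd h hm⟩
  choose l hl using hex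
  have key : ∀ m, m ≤ n + 1 → l m = LL n s (GG n s x) m := by
    intro m
    induction m with
    | zero =>
      intro h
      have := hl 0 h
      simp only [RE, RZ_zero, sub_zero] at this
      rw [LL_zero]; exact_mod_cast this.symm
    | succ m ih =>
      intro h
      have h1 := RE_bd n s _ hinv m (by omega)
      have h2 := RE_bd n s _ hinv (m + 1) (by omega)
      have h3 := hx m (by omega)
      rw [hl m (by omega), hl (m + 1) h] at h3
      have ih := ih (by omega)
      rw [LL_succ n s _ hinv m (by omega)]
      push_cast
      rw [← ih]
      split_ifs with hc
      · have a1 : (l m : ℝ) < l (m + 1) := by linarith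
        have a2 : (l (m + 1) : ℝ) < l m + 2 := by linarith
        have a1 : l m < l (m + 1) := by exact_mod_cast a1
        have a2 : l (m + 1) < l m + 2 := by exact_mod_cast a2
        omega
      · push Not at hc
        have a1 : (l (m + 1) : ℝ) < l m + 1 := by linarith
        have a2 : (l m : ℝ) < l (m + 1) + 1 := by linarith
        have a1 : l (m + 1) < l m + 1 := by exact_mod_cast a1
        have a2 : l m < l (m + 1) + 1 := by exact_mod_cast a2
        omega
  have h1 := key (n + 1) le_rfl
  have h2 := hl (n + 1) le_rfl
  rw [RZ_last, RE_last, sub_zero] at h2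
  rw [LL_last] at h1
  rw [← h1]; exact_mod_cast h2.symm

lemma invSeq_finite (n : ℕ) (s : Fin n → ℤ) (k : ℕ) :
    Finite {e : Fin n → ℤ // IsInvSeq n s e ∧ asc n s e = k} := by
  have : (Set.pi Set.univ fun i : Fin n => Set.Ico (0 : ℤ) (s i)).Finite :=
    Set.Finite.pi fun i => Set.finite_Ico _ _
  refine Set.Finite.to_subtype (this.subset ?_)
  intro e he i _
  exact he.1 i

/-- Truncation at height `j`. -/
def trunc (n : ℕ) (s : Fin n → ℤ) (j : ℕ) (z : Fin (n + 1) → ℤ) : Fin (n + 1) → ℤ :=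
  Fin.snoc (fun i : Fin n => min (z i.castSucc) (j * s i)) (min (z (Fin.last n)) j)

lemma RZ_trunc (n : ℕ) (s : Fin n → ℤ) (hs : ∀ i, 0 < s i) (j : ℕ) (z : Fin (n + 1) → ℤ)
    (m : ℕ) (hm : m ≤ n + 1) : RZ n s (trunc n s j z) m = min (RZ n s z m) j := by
  rcases cases_le hm with rfl | ⟨i, rfl⟩ | rfl
  · simp [RZ_zero]
  · have h0 : (0 : ℝ) < s i := by exact_mod_cast hs i
    rw [RZ_succ, RZ_succ]
    simp only [trunc, Fin.snoc_castSucc]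
    push_cast
    rw [← min_div_div_right h0.le, mul_div_cancel_right₀ _ h0.ne']
  · rw [RZ_last, RZ_last]; simp [trunc]

lemma RZ_mono_nonneg (n : ℕ) (s : Fin n → ℤ) (z : Fin (n + 1) → ℤ)
    (hz : ∀ m ≤ n, RZ n s z m ≤ RZ n s z (m + 1)) : 0 ≤ z (Fin.last n) := by
  have : ∀ m ≤ n + 1, 0 ≤ RZ n s z m := by
    intro m
    induction m with
    | zero => intro _; rw [RZ_zero]
    | succ m ih => intro h; exact (ih (by omega)).trans (hz m (by omega))
  have := this (n + 1) le_rfl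
  rw [RZ_last] at this; exact_mod_cast this

/-- Levelness: every box point can be completed to a box point of the top height. -/
lemma level_complete (n : ℕ) (s : Fin n → ℤ) (hs : ∀ i, 0 < s i) (hl : IsLevel n s) :
    ∃ r : ℤ, ∀ x, InPi n s x → ∃ z : Fin (n + 1) → ℤ,
      (∀ m ≤ n, RZ n s z m ≤ RZ n s z (m + 1)) ∧ InPi n s (x + z) ∧
      x (Fin.last n) + z (Fin.last n) = r := by
  obtain ⟨C, ⟨c0, hc0⟩, hC, hU⟩ := hl
  refine ⟨n + 1 - c0 (Fin.last n), fun x hx => ?_⟩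
  have hmem : VV n s - x ∈ lhpConeInteriorZ n s := by
    refine (interior_iff n s hs _).2 fun m hm => ?_
    change RZ n s (VV n s - x) m < RZ n s (VV n s - x) (m + 1)
    rw [RZ_sub, RZ_sub, RZ_VV n s hs m (by omega), RZ_VV n s hs (m + 1) (by omega)]
    have := hx m hm
    push_cast; linarith
  rw [← hU] at hmem
  simp only [Set.mem_iUnion, Set.mem_image] at hmem
  obtain ⟨c, hc, z, hz, hcz⟩ := hmem
  have hzm : ∀ m ≤ n, RZ n s z m ≤ RZ n s z (m + 1) := (cone_iff n s hs _).1 hz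
  have hcint : c ∈ lhpConeInteriorZ n s := by
    rw [← hU]
    simp only [Set.mem_iUnion, Set.mem_image]
    refine ⟨c, hc, 0, (cone_iff n s hs _).2 fun m hm => ?_, by simp⟩
    change RZ n s 0 m ≤ RZ n s 0 (m + 1)
    have h0 : ∀ m, RZ n s 0 m = 0 := fun m => by
      have := RZ_sub n s 0 0 m
      simpa using this
    rw [h0, h0]
  have hcm : ∀ m ≤ n, RZ n s c m < RZ n s c (m + 1) := (interior_iff n s hs _).1 hcint
  refine ⟨z, hzm, fun m hm => ?_, ?_⟩
  · have e1 : x + z = VV n s - c := by rw [eq_sub_iff_add_eq, add_assoc, add_comm z c, hcz]; simp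
    have hx1 := hx m hm
    have hz1 := hzm m hm
    have hc1 := hcm m hm
    refine ⟨?_, ?_⟩
    · rw [RZ_add, RZ_add]; linarith [hx1.1]
    · rw [e1, RZ_sub, RZ_sub, RZ_VV n s hs m (by omega), RZ_VV n s hs (m + 1) (by omega)]
      push_cast; linarith
  · have h1 := congrFun hcz (Fin.last n)
    simp [VV] at h1
    have h2 := hC c hc c0 hc0
    linarith

lemma exists_partner (n : ℕ) (s : Fin n → ℤ) (hs : ∀ i, 0 < s i) (hl : IsLevel n s)
    (i j : ℕ) (hpos : 0 < hStar n s (i + j)) (e : Fin n → ℤ) (he : IsInvSeq n s e)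
    (hi : asc n s e = i) :
    ∃ f : Fin (n + 1) → ℤ, InPi n s f ∧ InPi n s (lamOf n s e + f) ∧ f (Fin.last n) = j := by
  obtain ⟨r, hr⟩ := level_complete n s hs hl
  have hij : (i : ℤ) + j ≤ r := by
    have hne : Nonempty {e : Fin n → ℤ // IsInvSeq n s e ∧ asc n s e = i + j} :=
      (Nat.card_pos_iff.1 hpos).1
    obtain ⟨e', he', ha'⟩ := hne
    obtain ⟨z, hz, -, h3⟩ := hr _ (lam_inPi n s e' hs he')
    have := RZ_mono_nonneg n s z hz
    simp [lamOf, ha'] at h3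
    linarith
  obtain ⟨z, hz, hxz, hlast⟩ := hr _ (lam_inPi n s e hs he)
  have hlz : (j : ℤ) ≤ z (Fin.last n) := by
    simp [lamOf, hi] at hlast; linarith
  have hx := lam_inPi n s e hs he
  refine ⟨trunc n s j z, fun m hm => ?_, fun m hm => ?_, by simp [trunc, hlz]⟩
  all_goals
    have hx1 := hx m hm
    have hz1 := hz m hm
    have hxz1 := (hxz m hm).2
    simp only [RZ_add] at hxz1 ⊢
    rw [RZ_trunc n s hs j z m (by omega), RZ_trunc n s hs j z (m + 1) (by omega)]
    have h1 : min (RZ n s z m) (j : ℝ) ≤ min (RZ n s z (m + 1)) (j : ℝ) :=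
      min_le_min_right _ hz1
    have h2 : min (RZ n s z (m + 1)) (j : ℝ) - min (RZ n s z m) (j : ℝ)
        ≤ RZ n s z (m + 1) - RZ n s z m := by
      rcases min_cases (RZ n s z m) (j : ℝ) with h | h <;>
      rcases min_cases (RZ n s z (m + 1)) (j : ℝ) with h' | h' <;> linarith
    constructor <;> linarith [hx1.1, hx1.2]

theorem level_hStar_inequalities (n : ℕ) (s : Fin n → ℤ)
    (hs : ∀ i, 0 < s i) (hlevel : IsLevel n s) :
    ∀ i j : ℕ, 0 < hStar n s (i + j) →
      hStar n s i ≤ hStar n s j * hStar n s (i + j) := by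
  intro i j hpos
  have hex : ∀ e : {e : Fin n → ℤ // IsInvSeq n s e ∧ asc n s e = i},
      ∃ f : Fin (n + 1) → ℤ, InPi n s f ∧ InPi n s (lamOf n s e.1 + f) ∧ f (Fin.last n) = j :=
    fun e => exists_partner n s hs hlevel i j hpos e.1 e.2.1 e.2.2
  choose f hf1 hf2 hf3 using hex
  unfold hStar
  rw [← Nat.card_prod]
  have := invSeq_finite n s j
  have := invSeq_finite n s (i + j)
  refine Nat.card_le_card_of_injective
    (fun e => (⟨GG n s (f e), GG_inv n s hs _, ?_⟩,
      ⟨GG n s (lamOf n s e.1 + f e), GG_inv n s hs _, ?_⟩)) ?_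
  · have := GG_asc n s hs (f e) (hf1 e)
    rw [hf3] at this; exact_mod_cast this
  · have := GG_asc n s hs _ (hf2 e)
    rw [Pi.add_apply, hf3] at this
    have h3 : lamOf n s e.1 (Fin.last n) = i := by simp [lamOf, e.2.2]
    rw [h3] at this
    exact_mod_cast this
  · intro e e' h
    simp only [Prod.mk.injEq, Subtype.mk.injEq] at h
    obtain ⟨h1, h2⟩ := h
    apply Subtype.ext
    funext k
    have a1 := congrFun h1 k
    have a2 := congrFun h2 k
    simp only [GG, Pi.add_apply, lamOf, Fin.snoc_castSucc] at a1 a2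
    have b1 : -f e k.castSucc ≡ -f e' k.castSucc [ZMOD s k] := a1
    have b3 := Int.ModEq.sub a2 b1
    have b4 : e.1 k ≡ e'.1 k [ZMOD s k] := by
      rw [Int.modEq_iff_dvd] at b3 ⊢
      ring_nf at b3
      obtain ⟨c, hc⟩ := b3
      refine ⟨c + (((ascSet n s e'.1).filter fun i : Fin n => (i : ℕ) ≤ (k : ℕ)).card : ℤ) -
        (((ascSet n s e.1).filter fun i : Fin n => (i : ℕ) ≤ (k : ℕ)).card : ℤ), ?_⟩
      linear_combination hc
    have c1 := e.2.1 k
    have c2 := e'.2.1 k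
    have : e.1 k % s k = e'.1 k % s k := b4
    rwa [Int.emod_eq_of_lt c1.1 c1.2, Int.emod_eq_of_lt c2.1 c2.2] at this
end

section
/- Let s = (2,3,5,9). Then the inversion sequence e = (1,1,2,4) lies in I_{4,3}^(s), the maximum of asc over I_4^(s) equals 4, and there exists no e' ∈ I_{4,1}^(s) such that e + e' ∈ I_{4,4}^(s); consequently the lecture hall polytope P_4^{(2,3,5,9)} is not level. -/
open scoped BigOperators

theorem asc_formula (e : Fin 4 → ℤ) : asc 4 ![2, 3, 5, 9] e =
    (if 0 < e 0 then 1 else 0) + (if 3 * e 0 < 2 * e 1 then 1 else 0) +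
    (if 5 * e 1 < 3 * e 2 then 1 else 0) + (if 9 * e 2 < 5 * e 3 then 1 else 0) := by
  have h0 : prevRatio 4 ![2, 3, 5, 9] e 0 < invRatio 4 ![2, 3, 5, 9] e 0 ↔ 0 < e 0 := by
    simp [prevRatio, invRatio]
  have h1 : prevRatio 4 ![2, 3, 5, 9] e 1 < invRatio 4 ![2, 3, 5, 9] e 1 ↔
      3 * e 0 < 2 * e 1 := by
    have : prevRatio 4 ![2, 3, 5, 9] e 1 = (e 0 : ℚ) / 2 := by simp [prevRatio, invRatio]
    rw [this]
    have : invRatio 4 ![2, 3, 5, 9] e 1 = (e 1 : ℚ) / 3 := by simp [invRatio]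
    rw [this, div_lt_div_iff₀ (by norm_num) (by norm_num)]
    norm_cast
    constructor <;> intro h <;> linarith
  have h2 : prevRatio 4 ![2, 3, 5, 9] e 2 < invRatio 4 ![2, 3, 5, 9] e 2 ↔
      5 * e 1 < 3 * e 2 := by
    have : prevRatio 4 ![2, 3, 5, 9] e 2 = (e 1 : ℚ) / 3 := by simp [prevRatio, invRatio]
    rw [this]
    have : invRatio 4 ![2, 3, 5, 9] e 2 = (e 2 : ℚ) / 5 := by simp [invRatio]
    rw [this, div_lt_div_iff₀ (by norm_num) (by norm_num)]
    norm_cast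
    constructor <;> intro h <;> linarith
  have h3 : prevRatio 4 ![2, 3, 5, 9] e 3 < invRatio 4 ![2, 3, 5, 9] e 3 ↔
      9 * e 2 < 5 * e 3 := by
    have : prevRatio 4 ![2, 3, 5, 9] e 3 = (e 2 : ℚ) / 5 := by simp [prevRatio, invRatio]
    rw [this]
    have : invRatio 4 ![2, 3, 5, 9] e 3 = (e 3 : ℚ) / 9 := by simp [invRatio]
    rw [this, div_lt_div_iff₀ (by norm_num) (by norm_num)]
    norm_cast
    constructor <;> intro h <;> linarith
  rw [asc, ascSet, Finset.card_filter, Fin.sum_univ_four]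
  simp only [h0, h1, h2, h3]

theorem mem_cone_iff (x : Fin 5 → ℝ) : x ∈ lhpCone 4 ![2, 3, 5, 9] ↔
    0 ≤ x 0 ∧ 3 * x 0 ≤ 2 * x 1 ∧ 5 * x 1 ≤ 3 * x 2 ∧ 9 * x 2 ≤ 5 * x 3 ∧ x 3 ≤ 9 * x 4 := by
  have key : ∀ (a : ℝ) (b : Fin 4 → ℝ),
      a • (Fin.snoc (0 : Fin 4 → ℝ) 1 : Fin 5 → ℝ) +
        ∑ i : Fin 4, b i • (Fin.snoc (lhpVertexR 4 ![2, 3, 5, 9] i) 1 : Fin 5 → ℝ) =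
      ![2 * b 0, 3 * (b 0 + b 1), 5 * (b 0 + b 1 + b 2), 9 * (b 0 + b 1 + b 2 + b 3),
        a + (b 0 + b 1 + b 2 + b 3)] := by
    intro a b
    ext j
    have c2 : ∀ h, Fin.castPred (2 : Fin 5) h = (2 : Fin 4) := fun _ => rfl
    have c3 : ∀ h, Fin.castPred (3 : Fin 5) h = (3 : Fin 4) := fun _ => rfl
    have d1 : (1 : Fin 4) ≤ 2 := by decide
    have d2 : (1 : Fin 4) ≤ 3 := by decide
    have d3 : (2 : Fin 4) ≤ 3 := by decide
    have d4 : ¬ (3 : Fin 4) ≤ 2 := by decide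
    fin_cases j <;>
      simp [Fin.sum_univ_four, Fin.snoc, lhpVertexR, c2, c3, d1, d2, d3, d4] <;> ring
  constructor
  · rintro ⟨a, b, ha, hb, rfl⟩
    rw [key]
    have := hb 0
    have := hb 1
    have := hb 2
    have := hb 3
    simp
    refine ⟨?_, ?_, ?_, ?_, ?_⟩ <;> linarith
  · rintro ⟨h0, h1, h2, h3, h4⟩
    refine ⟨x 4 - x 3 / 9, ![x 0 / 2, x 1 / 3 - x 0 / 2, x 2 / 5 - x 1 / 3, x 3 / 9 - x 2 / 5],
      by linarith, ?_, ?_⟩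
    · intro i
      fin_cases i <;> simp <;> linarith
    · rw [key]
      ext j
      fin_cases j <;> simp <;> ring

theorem mem_int_iff (x : Fin 5 → ℝ) : x ∈ interior (lhpCone 4 ![2, 3, 5, 9]) ↔
    0 < x 0 ∧ 3 * x 0 < 2 * x 1 ∧ 5 * x 1 < 3 * x 2 ∧ 9 * x 2 < 5 * x 3 ∧ x 3 < 9 * x 4 := by
  constructor
  · intro hx
    have hc : Continuous fun r : ℝ => x - r • (![1, 2, 4, 8, 1] : Fin 5 → ℝ) := by fun_prop
    have hx' : interior (lhpCone 4 ![2, 3, 5, 9]) ∈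
        nhds (x - (0 : ℝ) • (![1, 2, 4, 8, 1] : Fin 5 → ℝ)) := by
      simpa using isOpen_interior.mem_nhds hx
    have h1 := hc.continuousAt.preimage_mem_nhds hx'
    obtain ⟨ε, hε, hb⟩ := Metric.mem_nhds_iff.1 h1
    have h2 : ε / 2 ∈ Metric.ball (0 : ℝ) ε := by
      rw [Metric.mem_ball, Real.dist_eq, sub_zero, abs_of_pos (by linarith)]
      linarith
    have h3 := (mem_cone_iff _).1 (interior_subset (hb h2))
    simp at h3
    obtain ⟨a, b, c, d, e⟩ := h3
    refine ⟨?_, ?_, ?_, ?_, ?_⟩ <;> linarith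
  · intro hx
    refine mem_interior.2 ⟨{x | 0 < x 0 ∧ 3 * x 0 < 2 * x 1 ∧ 5 * x 1 < 3 * x 2 ∧
      9 * x 2 < 5 * x 3 ∧ x 3 < 9 * x 4}, ?_, ?_, hx⟩
    · rintro y ⟨a, b, c, d, e⟩
      exact (mem_cone_iff y).2 ⟨a.le, b.le, c.le, d.le, e.le⟩
    · refine IsOpen.and ?_ (IsOpen.and ?_ (IsOpen.and ?_ (IsOpen.and ?_ ?_))) <;>
        exact isOpen_lt (by fun_prop) (by fun_prop)

theorem mem_coneZ_iff (x : Fin 5 → ℤ) : x ∈ lhpConeZ 4 ![2, 3, 5, 9] ↔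
    0 ≤ x 0 ∧ 3 * x 0 ≤ 2 * x 1 ∧ 5 * x 1 ≤ 3 * x 2 ∧ 9 * x 2 ≤ 5 * x 3 ∧ x 3 ≤ 9 * x 4 := by
  refine (mem_cone_iff _).trans ?_
  norm_cast

theorem mem_intZ_iff (x : Fin 5 → ℤ) : x ∈ lhpConeInteriorZ 4 ![2, 3, 5, 9] ↔
    0 < x 0 ∧ 3 * x 0 < 2 * x 1 ∧ 5 * x 1 < 3 * x 2 ∧ 9 * x 2 < 5 * x 3 ∧ x 3 < 9 * x 4 := by
  refine (mem_int_iff _).trans ?_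
  norm_cast

theorem not_level_aux : ¬ IsLevel 4 ![2, 3, 5, 9] := by
  rintro ⟨C, -, hC, hU⟩
  have hCint : ∀ c ∈ C, c ∈ lhpConeInteriorZ 4 ![2, 3, 5, 9] := by
    intro c hc
    rw [← hU]
    refine Set.mem_biUnion hc ⟨0, ?_, by simp⟩
    rw [mem_coneZ_iff]
    simp
  have dec : ∀ x ∈ lhpConeInteriorZ 4 ![2, 3, 5, 9],
      ∃ c ∈ C, ∃ y ∈ lhpConeZ 4 ![2, 3, 5, 9], c + y = x := by
    intro x hx
    rw [← hU] at hx
    obtain ⟨c, hc, y, hy, h⟩ := Set.mem_iUnion₂.1 hx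
    exact ⟨c, hc, y, hy, h⟩
  obtain ⟨c, hc, y, hy, hcy⟩ := dec ![1, 2, 4, 8, 1] (by rw [mem_intZ_iff]; simp)
  obtain ⟨d, hd, z, hz, hdz⟩ := dec ![1, 2, 6, 11, 2] (by rw [mem_intZ_iff]; simp)
  have hci := (mem_intZ_iff c).1 (hCint c hc)
  have hdi := (mem_intZ_iff d).1 (hCint d hd)
  rw [mem_coneZ_iff] at hy hz
  have hlast : c 4 = d 4 := hC c hc d hd
  have e4 : c 4 + y 4 = 1 := congrFun hcy 4
  have f0 : d 0 + z 0 = 1 := congrFun hdz 0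
  have f1 : d 1 + z 1 = 2 := congrFun hdz 1
  have f2 : d 2 + z 2 = 6 := congrFun hdz 2
  have f3 : d 3 + z 3 = 11 := congrFun hdz 3
  have f4 : d 4 + z 4 = 2 := congrFun hdz 4
  have g4 : d 4 = 1 := by omega
  have g3 : d 3 ≤ 8 := by omega
  have g2 : d 2 ≤ 4 := by omega
  have g1 : d 1 ≤ 2 := by omega
  omega

theorem lhp_2359_not_level :
    (IsInvSeq 4 ![2, 3, 5, 9] ![1, 1, 2, 4] ∧
      asc 4 ![2, 3, 5, 9] ![1, 1, 2, 4] = 3) ∧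
    IsGreatest
      {k : ℕ | ∃ e : Fin 4 → ℤ, IsInvSeq 4 ![2, 3, 5, 9] e ∧
        asc 4 ![2, 3, 5, 9] e = k} 4 ∧
    (¬ ∃ e' : Fin 4 → ℤ, IsInvSeq 4 ![2, 3, 5, 9] e' ∧
        asc 4 ![2, 3, 5, 9] e' = 1 ∧
        asc 4 ![2, 3, 5, 9] (invAdd 4 ![2, 3, 5, 9] ![1, 1, 2, 4] e') = 4) ∧
    ¬ IsLevel 4 ![2, 3, 5, 9] := by
  refine ⟨⟨?_, ?_⟩, ⟨⟨![1, 2, 4, 8], ?_, ?_⟩, ?_⟩, ?_, not_level_aux⟩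
  · intro i
    fin_cases i <;> simp
  · rw [asc_formula]
    simp
  · intro i
    fin_cases i <;> simp
  · rw [asc_formula]
    simp
  · rintro k ⟨e, -, rfl⟩
    exact (Finset.card_le_univ _).trans (by simp)
  · rintro ⟨e, he, h1, h4⟩
    rw [asc_formula] at h1 h4
    have b0 : 0 ≤ e 0 ∧ e 0 < 2 := he 0
    have b1 : 0 ≤ e 1 ∧ e 1 < 3 := he 1
    have b2 : 0 ≤ e 2 ∧ e 2 < 5 := he 2
    have b3 : 0 ≤ e 3 ∧ e 3 < 9 := he 3
    have a0 : invAdd 4 ![2, 3, 5, 9] ![1, 1, 2, 4] e 0 = (1 + e 0) % 2 := rfl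
    have a1 : invAdd 4 ![2, 3, 5, 9] ![1, 1, 2, 4] e 1 = (1 + e 1) % 3 := rfl
    have a2 : invAdd 4 ![2, 3, 5, 9] ![1, 1, 2, 4] e 2 = (2 + e 2) % 5 := rfl
    have a3 : invAdd 4 ![2, 3, 5, 9] ![1, 1, 2, 4] e 3 = (4 + e 3) % 9 := rfl
    rw [a0, a1, a2, a3] at h4
    have k : 0 < (1 + e 0) % 2 ∧ 3 * ((1 + e 0) % 2) < 2 * ((1 + e 1) % 3) ∧
        5 * ((1 + e 1) % 3) < 3 * ((2 + e 2) % 5) ∧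
        9 * ((2 + e 2) % 5) < 5 * ((4 + e 3) % 9) := by
      split_ifs at h4 <;> omega
    obtain ⟨k0, k1, k2, k3⟩ := k
    have m0 : e 0 = 0 := by omega
    have m1 : e 1 = 1 := by omega
    have m2 : e 2 = 2 := by omega
    have m3 : e 3 = 4 := by omega
    simp [m0, m1, m2, m3] at h1
end

section
/- Let s = (s_1,…,s_n) be a sequence of positive integers and let r = max{ asc(e) : e ∈ I_n^(s) }. Then the s-lecture hall polytope P_n^(s) is Gorenstein if and only if both of the following hold: (i) for every k with 1 ≤ k < r and every e ∈ I_{n,k}^(s), there exists e' ∈ I_{n,1}^(s) such that e + e' ∈ I_{n,k+1}^(s); and (ii) #I_{n,r}^(s) = 1. -/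
open scoped BigOperators

namespace LHPaux

noncomputable section

variable {n : ℕ}

/-- extended sequence `(s,1)` -/
def tt (s : Fin n → ℤ) : Fin (n + 1) → ℤ := Fin.snoc s 1

/-- partial sums -/
def PS {R : Type*} [AddCommMonoid R] (b : Fin (n + 1) → R) (j : Fin (n + 1)) : R :=
  ∑ i, if i ≤ j then b i else 0

/-- previous ratio -/
def prv (s : Fin n → ℤ) (z : Fin (n + 1) → ℝ) : Fin (n + 1) → ℝ :=
  Fin.cases 0 (fun j : Fin n => z j.castSucc / (tt s j.castSucc : ℝ))

/-- barycentric coordinates -/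
def Dr (s : Fin n → ℤ) (z : Fin (n + 1) → ℝ) (i : Fin (n + 1)) : ℝ :=
  z i / (tt s i : ℝ) - prv s z i

/-- barycentric coordinates of an integer point -/
def D (s : Fin n → ℤ) (z : Fin (n + 1) → ℤ) : Fin (n + 1) → ℝ :=
  Dr s (fun i => (z i : ℝ))

/-- integer combination of the vertices -/
def VV (s : Fin n → ℤ) (v : Fin (n + 1) → ℤ) : Fin (n + 1) → ℤ :=
  fun j => tt s j * PS v j

theorem tt_pos {s : Fin n → ℤ} (hs : ∀ i, 0 < s i) (i) : 0 < tt s i := by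
  refine Fin.lastCases ?_ (fun j => ?_) i
  · simp [tt]
  · simpa [tt] using hs j

theorem ttr_pos {s : Fin n → ℤ} (hs : ∀ i, 0 < s i) (i) : (0 : ℝ) < (tt s i : ℝ) := by
  exact_mod_cast tt_pos hs i

theorem PS_zero {R : Type*} [AddCommMonoid R] (b : Fin (n + 1) → R) : PS b 0 = b 0 := by
  simp [PS]

theorem PS_succ {R : Type*} [AddCommMonoid R] (b : Fin (n + 1) → R) (j : Fin n) :
    PS b j.succ = PS b j.castSucc + b j.succ := by
  have h : b j.succ = ∑ i, if i = j.succ then b i else 0 := by simp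
  rw [h, PS, PS, ← Finset.sum_add_distrib]
  refine Finset.sum_congr rfl fun i _ => ?_
  by_cases h1 : i = j.succ
  · subst h1
    have : ¬ (j.succ ≤ j.castSucc) := by simp [Fin.le_def]
    simp [this]
  · have : i ≤ j.succ ↔ i ≤ j.castSucc := by
      rw [Fin.le_def, Fin.le_def]
      rw [Fin.ext_iff] at h1
      simp at h1 ⊢
      omega
    simp [h1, this]

theorem PS_last {R : Type*} [AddCommMonoid R] (b : Fin (n + 1) → R) :
    PS b (Fin.last n) = ∑ i, b i := by
  simp [PS, Fin.le_last]

theorem PS_cast (v : Fin (n + 1) → ℤ) (j) : ((PS v j : ℤ) : ℝ) = PS (fun i => (v i : ℝ)) j := by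
  simp [PS]

/-- linear equivalence from barycentric coordinates -/
def Phi (s : Fin n → ℤ) (hs : ∀ i, 0 < s i) :
    (Fin (n + 1) → ℝ) ≃ₗ[ℝ] (Fin (n + 1) → ℝ) where
  toFun b := fun j => (tt s j : ℝ) * PS b j
  invFun z := Dr s z
  map_add' a b := by
    funext j
    simp only [PS, Pi.add_apply]
    rw [← mul_add, ← Finset.sum_add_distrib]
    congr 1
    refine Finset.sum_congr rfl fun i _ => ?_
    split_ifs <;> simp
  map_smul' c b := by
    funext j
    simp only [PS, Pi.smul_apply, smul_eq_mul, RingHom.id_apply]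
    rw [mul_left_comm c]
    refine congrArg _ ?_
    rw [Finset.mul_sum]
    refine Finset.sum_congr rfl fun i _ => ?_
    split_ifs <;> simp
  left_inv b := by
    funext j
    have h := fun i => (ttr_pos hs i).ne'
    refine Fin.cases ?_ (fun i => ?_) j
    · simp only [Dr, prv, Fin.cases_zero, PS_zero]
      rw [mul_div_cancel_left₀ _ (h 0)]
      simp
    · simp only [Dr, prv, Fin.cases_succ, PS_succ]
      have h1 := h i.succ
      have h2 := h i.castSucc
      rw [mul_div_cancel_left₀ _ h1, mul_div_cancel_left₀ _ h2]
      ring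
  right_inv z := by
    have h := fun i => (ttr_pos hs i).ne'
    have key : ∀ j, PS (Dr s z) j = z j / (tt s j : ℝ) := by
      intro j
      induction j using Fin.induction with
      | zero => simp [PS_zero, Dr, prv]
      | succ i ih => rw [PS_succ, ih]; simp [Dr, prv]
    funext j
    simp only [key]
    rw [mul_div_cancel₀ _ (h j)]

theorem Phi_symm (s : Fin n → ℤ) (hs : ∀ i, 0 < s i) (z) : (Phi s hs).symm z = Dr s z := rfl

theorem cone_eq (s : Fin n → ℤ) (hs : ∀ i, 0 < s i) :
    lhpCone n s = (Phi s hs) '' (Set.univ.pi fun _ => Set.Ici (0 : ℝ)) := by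
  have key : ∀ (a : ℝ) (b : Fin n → ℝ),
      a • (Fin.snoc (0 : Fin n → ℝ) 1 : Fin (n + 1) → ℝ) +
        ∑ i : Fin n, b i • (Fin.snoc (lhpVertexR n s i) 1 : Fin (n + 1) → ℝ)
      = Phi s hs (Fin.snoc b a : Fin (n + 1) → ℝ) := by
    intro a b
    funext j
    show _ = (tt s j : ℝ) * PS (Fin.snoc b a : Fin (n + 1) → ℝ) j
    refine Fin.lastCases ?_ (fun i => ?_) j
    · rw [PS_last, Fin.sum_univ_castSucc]
      simp [tt, Finset.sum_apply]
      ring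
    · simp only [PS, Fin.sum_univ_castSucc]
      have : ¬ (Fin.last n ≤ i.castSucc) := by simp [Fin.le_def]
      simp [tt, Finset.sum_apply, lhpVertexR, Finset.mul_sum, this]
      refine Finset.sum_congr rfl fun k _ => ?_
      split_ifs
      · ring
      · rfl
  ext x
  constructor
  · rintro ⟨a, b, ha, hb, rfl⟩
    rw [key]
    refine ⟨_, ?_, rfl⟩
    intro i _
    refine Fin.lastCases ?_ (fun i => ?_) i
    · simpa using ha
    · simpa using hb i
  · rintro ⟨c, hc, rfl⟩
    refine ⟨c (Fin.last n), fun i => c i.castSucc, hc _ trivial, fun i => hc _ trivial, ?_⟩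
    rw [key]
    congr 1
    funext j
    refine Fin.lastCases ?_ (fun i => ?_) j <;> simp

theorem mem_coneZ (s : Fin n → ℤ) (hs : ∀ i, 0 < s i) (z) :
    z ∈ lhpConeZ n s ↔ ∀ i, 0 ≤ D s z i := by
  rw [lhpConeZ, Set.mem_ofPred_eq, cone_eq s hs]
  constructor
  · rintro ⟨b, hb, h⟩ i
    have : D s z = b := by
      rw [D, ← h, ← Phi_symm s hs, LinearEquiv.symm_apply_apply]
    rw [this]
    exact hb i trivial
  · intro h
    refine ⟨D s z, fun i _ => h i, ?_⟩
    rw [D, ← Phi_symm s hs, LinearEquiv.apply_symm_apply]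

theorem mem_intZ (s : Fin n → ℤ) (hs : ∀ i, 0 < s i) (z) :
    z ∈ lhpConeInteriorZ n s ↔ ∀ i, 0 < D s z i := by
  have hi : interior (lhpCone n s) = (Phi s hs) '' (Set.univ.pi fun _ => Set.Ioi (0 : ℝ)) := by
    rw [cone_eq s hs]
    have h := (Phi s hs).toContinuousLinearEquiv.toHomeomorph.image_interior
      (Set.univ.pi fun _ => Set.Ici (0 : ℝ))
    rw [interior_pi_set Set.finite_univ] at h
    simp only [interior_Ici] at h
    exact h.symm
  rw [lhpConeInteriorZ, Set.mem_ofPred_eq, hi]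
  constructor
  · rintro ⟨b, hb, h⟩ i
    have : D s z = b := by
      rw [D, ← h, ← Phi_symm s hs, LinearEquiv.symm_apply_apply]
    rw [this]
    exact hb i trivial
  · intro h
    refine ⟨D s z, fun i _ => h i, ?_⟩
    rw [D, ← Phi_symm s hs, LinearEquiv.apply_symm_apply]

theorem D_add (s : Fin n → ℤ) (z w : Fin (n + 1) → ℤ) (i) :
    D s (z + w) i = D s z i + D s w i := by
  refine Fin.cases ?_ (fun j => ?_) i
  · simp [D, Dr, prv]; ring
  · simp [D, Dr, prv]; ring

theorem D_neg (s : Fin n → ℤ) (z : Fin (n + 1) → ℤ) (i) : D s (-z) i = - D s z i := by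
  refine Fin.cases ?_ (fun j => ?_) i
  · simp [D, Dr, prv]; ring
  · simp [D, Dr, prv]; ring

theorem D_sub (s : Fin n → ℤ) (z w : Fin (n + 1) → ℤ) (i) :
    D s (z - w) i = D s z i - D s w i := by
  rw [sub_eq_add_neg, D_add, D_neg]; ring

theorem D_VV (s : Fin n → ℤ) (hs : ∀ i, 0 < s i) (v : Fin (n + 1) → ℤ) (i) :
    D s (VV s v) i = v i := by
  have : D s (VV s v) = fun i => (v i : ℝ) := by
    rw [D, ← Phi_symm s hs, LinearEquiv.symm_apply_eq]
    funext j
    show ((tt s j * PS v j : ℤ) : ℝ) = (tt s j : ℝ) * PS _ j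
    push_cast
    rw [PS_cast]
  rw [this]

theorem D_inj (s : Fin n → ℤ) (hs : ∀ i, 0 < s i) (z w) (h : ∀ i, D s z i = D s w i) :
    z = w := by
  have h' : Dr s (fun i => (z i : ℝ)) = Dr s (fun i => (w i : ℝ)) := funext h
  rw [← Phi_symm s hs, ← Phi_symm s hs] at h'
  have := (Phi s hs).symm.injective h'
  funext i
  exact_mod_cast congrFun this i

theorem D_sum (s : Fin n → ℤ) (hs : ∀ i, 0 < s i) (z : Fin (n + 1) → ℤ) :
    ∑ i, D s z i = z (Fin.last n) := by
  have h := congrFun ((Phi s hs).apply_symm_apply (fun i => (z i : ℝ))) (Fin.last n)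
  rw [Phi_symm] at h
  have h2 : (tt s (Fin.last n) : ℝ) * PS (D s z) (Fin.last n) = z (Fin.last n) := h
  rw [PS_last] at h2
  simpa [tt] using h2

/-- indicator of ascents -/
def uu (s e : Fin n → ℤ) : Fin (n + 1) → ℤ :=
  Fin.snoc (fun i => if i ∈ ascSet n s e then 1 else 0) 0

/-- extension of `e` by zero -/
def ext0 (e : Fin n → ℤ) : Fin (n + 1) → ℤ := Fin.snoc e 0

theorem lam_eq (s e : Fin n → ℤ) : lamOf n s e = VV s (uu s e) - ext0 e := by
  funext j
  refine Fin.lastCases ?_ (fun i => ?_) j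
  · simp [lamOf, VV, PS_last, Fin.sum_univ_castSucc, uu, ext0, tt, asc]
  · have : ¬ (Fin.last n ≤ i.castSucc) := by simp [Fin.le_def]
    simp only [lamOf, VV, PS, Fin.sum_univ_castSucc, uu, ext0, tt, Pi.sub_apply,
      Fin.snoc_castSucc, this]
    rw [mul_comm, Finset.card_filter]
    congr 2
    push_cast
    rw [← Finset.sum_filter_add_sum_filter_not Finset.univ (fun k => k ∈ ascSet n s e)]
    rw [Finset.sum_eq_zero (s := Finset.univ.filter fun k => k ∉ ascSet n s e)]
    · simp only [add_zero, Finset.filter_univ_mem]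
      refine Finset.sum_congr rfl fun k hk => ?_
      rw [if_pos hk]
      rfl
    · intro k hk
      have hk' := (Finset.mem_filter.1 hk).2
      simp [hk']

theorem lam_last (s e : Fin n → ℤ) : lamOf n s e (Fin.last n) = asc n s e := by
  simp [lamOf]

theorem ratio_bd {s e : Fin n → ℤ} (hs : ∀ i, 0 < s i) (he : IsInvSeq n s e) (j : Fin n) :
    0 ≤ (e j : ℝ) / (s j : ℝ) ∧ (e j : ℝ) / (s j : ℝ) < 1 := by
  have h1 : (0 : ℝ) < s j := by exact_mod_cast hs j
  have h2 : (0 : ℝ) ≤ e j := by exact_mod_cast (he j).1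
  have h3 : (e j : ℝ) < s j := by exact_mod_cast (he j).2
  exact ⟨by positivity, (div_lt_one h1).2 h3⟩

theorem prv_ext0 (s e : Fin n → ℤ) (j : Fin n) :
    prv s (fun i => (ext0 e i : ℝ)) j.castSucc = ((prevRatio n s e j : ℚ) : ℝ) := by
  rcases j with ⟨j, hj⟩
  cases j with
  | zero =>
    have : (Fin.castSucc (⟨0, hj⟩ : Fin n)) = 0 := rfl
    rw [this]
    simp [prv, prevRatio]
  | succ k =>
    have : (Fin.castSucc (⟨k + 1, hj⟩ : Fin n)) = Fin.succ ⟨k, by omega⟩ := rfl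
    rw [this]
    simp [prv, prevRatio, invRatio, ext0, tt]

theorem prv_bd {s e : Fin n → ℤ} (hs : ∀ i, 0 < s i) (he : IsInvSeq n s e) (j) :
    0 ≤ prv s (fun i => (ext0 e i : ℝ)) j ∧ prv s (fun i => (ext0 e i : ℝ)) j < 1 := by
  refine Fin.cases ?_ (fun i => ?_) j
  · simp [prv]
  · simpa [prv, ext0, tt] using ratio_bd hs he i

theorem D_lam {s e : Fin n → ℤ} (hs : ∀ i, 0 < s i) (he : IsInvSeq n s e) (i) :
    0 ≤ D s (lamOf n s e) i ∧ D s (lamOf n s e) i < 1 := by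
  rw [lam_eq, D_sub, D_VV s hs]
  refine Fin.lastCases ?_ (fun j => ?_) i
  · have := prv_bd hs he (Fin.last n)
    simp only [D, Dr]
    simpa [uu, ext0] using this
  · have h1 := prv_bd hs he j.castSucc
    have h2 := ratio_bd hs he j
    have h4 : D s (ext0 e) j.castSucc
        = (e j : ℝ) / (s j : ℝ) - prv s (fun i => (ext0 e i : ℝ)) j.castSucc := by
      simp [D, Dr, ext0, tt]
    have h3 : j ∈ ascSet n s e ↔
        prv s (fun i => (ext0 e i : ℝ)) j.castSucc < (e j : ℝ) / (s j : ℝ) := by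
      rw [prv_ext0]
      have : (e j : ℝ) / (s j : ℝ) = ((invRatio n s e j : ℚ) : ℝ) := by simp [invRatio]
      rw [this, Rat.cast_lt]
      simp [ascSet]
    rw [h4]
    by_cases h : j ∈ ascSet n s e
    · have h' := h3.1 h
      simp only [uu, Fin.snoc_castSucc, h, if_true]
      push_cast
      constructor <;> linarith
    · have h' := not_lt.1 (fun q => h (h3.2 q))
      simp only [uu, Fin.snoc_castSucc, h, if_false]
      push_cast
      constructor <;> linarith

/-- inversion sequence of an integer point -/
def EE (s : Fin n → ℤ) (z : Fin (n + 1) → ℤ) : Fin n → ℤ := fun j => (-z j.castSucc) % s j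

theorem EE_inv {s : Fin n → ℤ} (hs : ∀ i, 0 < s i) (z) : IsInvSeq n s (EE s z) := fun i =>
  ⟨Int.emod_nonneg _ (hs i).ne', Int.emod_lt_of_pos _ (hs i)⟩

theorem lam_mod (s e : Fin n → ℤ) (j : Fin n) :
    ∃ q, lamOf n s e j.castSucc = q * s j - e j := by
  refine ⟨((ascSet n s e).filter fun i : Fin n => (i : ℕ) ≤ (j : ℕ)).card, ?_⟩
  simp only [lamOf, Fin.snoc_castSucc]

theorem EE_lam {s e : Fin n → ℤ} (he : IsInvSeq n s e) :
    EE s (lamOf n s e) = e := by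
  funext j
  obtain ⟨q, hq⟩ := lam_mod s e j
  simp only [EE, hq]
  have : -(q * s j - e j) = e j + s j * (-q) := by ring
  rw [this, Int.add_mul_emod_self_left, Int.emod_eq_of_lt (he j).1 (he j).2]

theorem EE_add (s e f : Fin n → ℤ) :
    EE s (lamOf n s e + lamOf n s f) = invAdd n s e f := by
  funext j
  obtain ⟨q, hq⟩ := lam_mod s e j
  obtain ⟨p, hp⟩ := lam_mod s f j
  simp only [EE, hq, hp, Pi.add_apply, invAdd]
  have : -(q * s j - e j + (p * s j - f j)) = e j + f j + s j * (-q - p) := by ring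
  rw [this, Int.add_mul_emod_self_left]

theorem decomp (s : Fin n → ℤ) (hs : ∀ i, 0 < s i) (z : Fin (n + 1) → ℤ) :
    ∃ v : Fin (n + 1) → ℤ, ∀ i, D s z i = D s (lamOf n s (EE s z)) i + v i := by
  have hdiv : ∀ j, ∃ q : ℤ, z j - lamOf n s (EE s z) j = tt s j * q := by
    intro j
    refine Fin.lastCases ?_ (fun i => ?_) j
    · exact ⟨_, by simp [tt]; rfl⟩
    · obtain ⟨p, hp⟩ := lam_mod s (EE s z) i
      have h := Int.emod_add_mul_ediv (-z i.castSucc) (s i)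
      refine ⟨-(-z i.castSucc / s i) - p, ?_⟩
      rw [hp]
      simp only [EE, tt, Fin.snoc_castSucc]
      linear_combination h
  choose q hq using hdiv
  refine ⟨fun i => q i - (Fin.cases 0 (fun j : Fin n => q j.castSucc) i : ℤ), fun i => ?_⟩
  have h0 : D s z i - D s (lamOf n s (EE s z)) i
      = D s (fun j => tt s j * q j) i := by
    rw [← D_sub]
    congr 1
    funext j
    exact hq j
  have h := fun i => (ttr_pos hs i).ne'
  have h1 : D s (fun j => tt s j * q j) i
      = q i - ((Fin.cases 0 (fun j : Fin n => q j.castSucc) i : ℤ) : ℝ) := by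
    refine Fin.cases ?_ (fun i => ?_) i
    · simp [D, Dr, prv, mul_div_cancel_left₀ _ (h _)]
    · simp [D, Dr, prv, mul_div_cancel_left₀ _ (h _)]
  push_cast
  linarith

theorem lam_EE (s : Fin n → ℤ) (hs : ∀ i, 0 < s i) (z : Fin (n + 1) → ℤ)
    (h : ∀ i, 0 ≤ D s z i ∧ D s z i < 1) : lamOf n s (EE s z) = z := by
  obtain ⟨v, hv⟩ := decomp s hs z
  refine D_inj s hs _ _ fun i => ?_
  have h1 := D_lam hs (EE_inv hs z) i
  have h2 := h i
  have h3 := hv i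
  have a : (v i : ℝ) < 1 := by linarith
  have b : (-1 : ℝ) < v i := by linarith
  have a' : v i < 1 := by exact_mod_cast a
  have b' : -1 < v i := by exact_mod_cast b
  have : v i = 0 := by omega
  rw [h3, this]; simp

theorem invAdd_inv {s : Fin n → ℤ} (hs : ∀ i, 0 < s i) (e f) : IsInvSeq n s (invAdd n s e f) :=
  fun i => ⟨Int.emod_nonneg _ (hs i).ne', Int.emod_lt_of_pos _ (hs i)⟩

theorem lam_add {s : Fin n → ℤ} (hs : ∀ i, 0 < s i) {e f : Fin n → ℤ} (he : IsInvSeq n s e)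
    (hf : IsInvSeq n s f) (h : asc n s (invAdd n s e f) = asc n s e + asc n s f) :
    lamOf n s (invAdd n s e f) = lamOf n s e + lamOf n s f := by
  obtain ⟨v, hv⟩ := decomp s hs (lamOf n s e + lamOf n s f)
  rw [EE_add] at hv
  have hv0 : ∀ i ∈ Finset.univ, 0 ≤ v i := by
    intro i _
    have h1 := D_lam hs he i
    have h2 := D_lam hs hf i
    have h3 := D_lam hs (invAdd_inv hs e f) i
    have h4 := hv i
    rw [D_add] at h4
    have b : (-1 : ℝ) < v i := by linarith
    have b' : -1 < v i := by exact_mod_cast b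
    omega
  have hsum : ∑ i, v i = 0 := by
    have h1 := D_sum s hs (lamOf n s e + lamOf n s f)
    have h2 := D_sum s hs (lamOf n s (invAdd n s e f))
    simp only [hv] at h1
    rw [Finset.sum_add_distrib, h2] at h1
    simp only [Pi.add_apply, lam_last, h] at h1
    push_cast at h1
    have : (∑ i, (v i : ℝ)) = 0 := by linarith
    exact_mod_cast this
  have hz := (Finset.sum_eq_zero_iff_of_nonneg hv0).1 hsum
  refine D_inj s hs _ _ fun i => ?_
  rw [hv i, hz i (Finset.mem_univ _)]; simp

/-- Decomposition property. -/
theorem idp (s : Fin n → ℤ) (hs : ∀ i, 0 < s i) (z : Fin (n + 1) → ℤ)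
    (h : ∀ i, 0 ≤ D s z i) (i) :
    0 ≤ D s (fun j => min (z j) (tt s j)) i ∧
      D s (fun j => min (z j) (tt s j)) i ≤ D s z i := by
  have hm : ∀ j, ((min (z j) (tt s j) : ℤ) : ℝ) / (tt s j : ℝ)
      = min ((z j : ℝ) / (tt s j : ℝ)) 1 := by
    intro j
    have ht := ttr_pos hs j
    push_cast
    rw [← min_div_div_right ht.le, div_self ht.ne']
  have key : D s (fun j => min (z j) (tt s j)) i =
      min ((z i : ℝ) / (tt s i : ℝ)) 1 - min (prv s (fun i => (z i : ℝ)) i) 1 := by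
    simp only [D, Dr]
    rw [hm]
    congr 1
    refine Fin.cases ?_ (fun j => ?_) i
    · simp [prv]
    · simp only [prv, Fin.cases_succ]
      rw [hm]
  have h1 := h i
  simp only [D, Dr] at h1
  rw [key]
  simp only [D, Dr]
  generalize (z i : ℝ) / (tt s i : ℝ) = x at *
  generalize prv s (fun i => (z i : ℝ)) i = y at *
  rcases le_total x 1 with hx | hx <;> rcases le_total y 1 with hy | hy <;>
    simp only [hx, hy, min_eq_left, min_eq_right] <;> constructor <;> linarith

end

end LHPaux

open LHPaux
theorem lhp_gorenstein_iff_level_cond (n : ℕ) (s : Fin n → ℤ)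
    (hs : ∀ i, 0 < s i) (r : ℕ)
    (hr : IsGreatest {k : ℕ | ∃ e : Fin n → ℤ, IsInvSeq n s e ∧ asc n s e = k} r) :
    IsGorenstein n s ↔
      ((∀ k : ℕ, 1 ≤ k → k < r →
        ∀ e : Fin n → ℤ, IsInvSeq n s e → asc n s e = k →
          ∃ e' : Fin n → ℤ, IsInvSeq n s e' ∧ asc n s e' = 1 ∧
            IsInvSeq n s (invAdd n s e e') ∧ asc n s (invAdd n s e e') = k + 1) ∧
        hStar n s r = 1) := by
  constructor
  · rintro ⟨c, hc⟩
    have hci : ∀ i, 0 < D s c i := by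
      rw [← mem_intZ s hs, ← hc]
      refine ⟨0, ?_, by simp⟩
      rw [mem_coneZ s hs]
      intro i
      have := D_add s 0 0 i
      simp only [add_zero] at this
      linarith
    have hmin : ∀ y, (∀ i, 0 < D s y i) → ∀ i, D s c i ≤ D s y i := by
      intro y hy i
      rw [← mem_intZ s hs, ← hc] at hy
      obtain ⟨x, hx, rfl⟩ := hy
      rw [mem_coneZ s hs] at hx
      have := hx i
      simp only [D_add]
      linarith
    have hmin' : ∀ e, IsInvSeq n s e → ∀ i, D s c i ≤ 1 - D s (lamOf n s e) i := by
      intro e he i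
      have h := hmin (VV s 1 - lamOf n s e) (fun j => by
        rw [D_sub, D_VV s hs]
        have := (D_lam hs he j).2
        simpa using this) i
      rw [D_sub, D_VV s hs] at h
      simpa using h
    obtain ⟨v, hv⟩ := decomp s hs (-c)
    set e0 := EE s (-c) with he0
    have he0i : IsInvSeq n s e0 := EE_inv hs _
    have hceq : ∀ i, D s c i = 1 - D s (lamOf n s e0) i := by
      intro i
      have h1 := hv i
      rw [D_neg] at h1
      have h2 := D_lam hs he0i i
      have h3 := hci i
      have h4 := hmin' e0 he0i i
      have a : (v i : ℝ) < 0 := by linarith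
      have a' : v i < 0 := by exact_mod_cast a
      have b : (v i : ℝ) ≤ -1 := by exact_mod_cast (show v i ≤ -1 by omega)
      linarith
    have hmax : ∀ e, IsInvSeq n s e → ∀ i, D s (lamOf n s e) i ≤ D s (lamOf n s e0) i := by
      intro e he i
      have := hmin' e he i
      rw [hceq] at this
      linarith
    have hascle : ∀ e, IsInvSeq n s e → asc n s e ≤ asc n s e0 := by
      intro e he
      have h1 := D_sum s hs (lamOf n s e)
      have h2 := D_sum s hs (lamOf n s e0)
      rw [lam_last] at h1 h2
      have h3 := Finset.sum_le_sum (fun i (_ : i ∈ Finset.univ) => hmax e he i)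
      rw [h1, h2] at h3
      exact_mod_cast h3
    have he0r : asc n s e0 = r := by
      obtain ⟨⟨e, he, hea⟩, hub⟩ := hr
      have h1 := hub ⟨e0, he0i, rfl⟩
      have h2 := hascle e he
      omega
    refine ⟨?_, ?_⟩
    · intro k hk1 hkr e he hek
      set z := lamOf n s e0 - lamOf n s e with hz
      have hz0 : ∀ i, 0 ≤ D s z i := by
        intro i
        rw [hz, D_sub]
        linarith [hmax e he i]
      have hid := idp s hs z hz0
      set y : Fin (n + 1) → ℤ := fun j => min (z j) (tt s j) with hy
      have hlast : y (Fin.last n) = 1 := by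
        simp only [hy, hz, Pi.sub_apply, lam_last, he0r, hek]
        simp [tt]
        omega
      have hfy : lamOf n s (EE s y) = y := by
        refine lam_EE s hs y fun i => ⟨(hid i).1, ?_⟩
        have h1 := (hid i).2
        have h2 := (D_lam hs he i).1
        have h3 := (D_lam hs he0i i).2
        have h4 : D s z i = _ := D_sub s _ _ i
        linarith
      have hsum : lamOf n s (invAdd n s e (EE s y)) = lamOf n s e + y := by
        have := lam_EE s hs (lamOf n s e + y) fun i => by
          rw [D_add]
          have h1 := hid i
          have h2 := (D_lam hs he i).1
          have h3 := (D_lam hs he0i i).2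
          have h4 : D s z i = _ := D_sub s _ _ i
          constructor <;> linarith
        rw [← this]
        congr 1
        rw [← EE_add, hfy]
      refine ⟨EE s y, EE_inv hs y, ?_, invAdd_inv hs _ _, ?_⟩
      · have := lam_last s (EE s y)
        rw [hfy, hlast] at this
        exact_mod_cast this.symm
      · have := lam_last s (invAdd n s e (EE s y))
        rw [hsum, Pi.add_apply, lam_last, hlast, hek] at this
        exact_mod_cast this.symm
    · rw [hStar, Nat.card_eq_one_iff_unique]
      have huniq : ∀ e, IsInvSeq n s e → asc n s e = r → e = e0 := by
        intro e he her
        have h1 := D_sum s hs (lamOf n s e)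
        have h2 := D_sum s hs (lamOf n s e0)
        rw [lam_last, her] at h1
        rw [lam_last, he0r] at h2
        have h3 := (Finset.sum_eq_sum_iff_of_le (fun i (_ : i ∈ Finset.univ) => hmax e he i)).1
          (h1.trans h2.symm)
        have h4 := D_inj s hs _ _ fun i => h3 i (Finset.mem_univ _)
        rw [← EE_lam he, h4, EE_lam he0i]
      refine ⟨⟨?_⟩, ⟨⟨e0, he0i, he0r⟩⟩⟩
      rintro ⟨a, ha, ha'⟩ ⟨b, hb, hb'⟩
      exact Subtype.ext ((huniq a ha ha').trans (huniq b hb hb').symm)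
  · rintro ⟨h1, h2⟩
    rw [hStar, Nat.card_eq_one_iff_unique] at h2
    obtain ⟨hsub, ⟨⟨e0, he0i, he0r⟩⟩⟩ := h2
    have hmax : ∀ m e, IsInvSeq n s e → asc n s e + m = r →
        ∀ i, D s (lamOf n s e) i ≤ D s (lamOf n s e0) i := by
      intro m
      induction m with
      | zero =>
        intro e he hea i
        have : e = e0 := congrArg Subtype.val
          (hsub.elim ⟨e, he, by simpa using hea⟩ ⟨e0, he0i, he0r⟩)
        rw [this]
      | succ m ih =>
        intro e he hea i
        by_cases hk : asc n s e = 0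
        · have h3 := D_sum s hs (lamOf n s e)
          rw [lam_last, hk] at h3
          have h4 := (Finset.sum_eq_zero_iff_of_nonneg
            (fun i (_ : i ∈ Finset.univ) => (D_lam hs he i).1)).1 (by simpa using h3)
          rw [h4 i (Finset.mem_univ _)]
          exact (D_lam hs he0i i).1
        · obtain ⟨f, hf, hfa, hef, hefa⟩ :=
            h1 (asc n s e) (by omega) (by omega) e he rfl
          have h5 := ih _ hef (by omega) i
          rw [lam_add hs he hf (by omega), D_add] at h5
          linarith [(D_lam hs hf i).1]
    refine ⟨VV s 1 - lamOf n s e0, ?_⟩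
    have hDc : ∀ i, D s (VV s 1 - lamOf n s e0) i = 1 - D s (lamOf n s e0) i := by
      intro i
      rw [D_sub, D_VV s hs]; simp
    ext y
    constructor
    · rintro ⟨x, hx, rfl⟩
      rw [mem_coneZ s hs] at hx
      rw [mem_intZ s hs]
      intro i
      simp only [D_add]
      rw [hDc]
      linarith [hx i, (D_lam hs he0i i).2]
    · intro hy
      rw [mem_intZ s hs] at hy
      refine ⟨y - (VV s 1 - lamOf n s e0), ?_, by simp⟩
      rw [mem_coneZ s hs]
      intro i
      rw [D_sub, hDc]
      obtain ⟨v, hv⟩ := decomp s hs (-y)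
      have he := EE_inv hs (-y)
      have h3 := hv i
      rw [D_neg] at h3
      have h4 := D_lam hs he i
      have h5 := hy i
      have hle : asc n s (EE s (-y)) ≤ r := hr.2 ⟨_, he, rfl⟩
      have h6 := hmax (r - asc n s (EE s (-y))) _ he (by omega) i
      have a : (v i : ℝ) < 0 := by linarith
      have a' : v i < 0 := by exact_mod_cast a
      have b : (v i : ℝ) ≤ -1 := by exact_mod_cast (show v i ≤ -1 by omega)
      linarith
end

section
/- For every pair of positive integers (s_1, s_2), the two-dimensional lecture hall polytope P_2^{(s_1,s_2)} is level. -/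
open scoped BigOperators

/-- Interior lattice points, described by integer inequalities. -/
def lhpTwoInt (s₁ s₂ x y z : ℤ) : Prop := 0 < x ∧ s₂ * x < s₁ * y ∧ y < s₂ * z

/-- Cone lattice points, described by integer inequalities. -/
def lhpTwoCone (s₁ s₂ x y z : ℤ) : Prop := 0 ≤ x ∧ s₂ * x ≤ s₁ * y ∧ y ≤ s₂ * z

theorem lhpCone_two_iff (s₁ s₂ : ℤ) (h₁ : 0 < s₁) (h₂ : 0 < s₂) (x : Fin 3 → ℝ) :
    x ∈ lhpCone 2 ![s₁, s₂] ↔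
      0 ≤ x 0 ∧ (s₂ : ℝ) * x 0 ≤ s₁ * x 1 ∧ x 1 ≤ s₂ * x 2 := by
  have p₁ : (0 : ℝ) < s₁ := by exact_mod_cast h₁
  have p₂ : (0 : ℝ) < s₂ := by exact_mod_cast h₂
  constructor
  · rintro ⟨a, b, ha, hb, rfl⟩
    have hb0 := hb 0
    have hb1 := hb 1
    simp [Fin.sum_univ_two, lhpVertexR, Fin.snoc]
    refine ⟨by positivity, ?_, ?_⟩
    · nlinarith [mul_nonneg hb1 (mul_pos p₁ p₂).le]
    · nlinarith [mul_nonneg ha p₂.le]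
  · rintro ⟨ha, hb, hc⟩
    refine ⟨x 2 - x 1 / s₂, ![x 0 / s₁, x 1 / s₂ - x 0 / s₁], ?_, ?_, ?_⟩
    · rw [sub_nonneg, div_le_iff₀ p₂]; linarith
    · intro i
      fin_cases i
      · simp; positivity
      · simp
        rw [div_le_div_iff₀ p₁ p₂]; linarith
    · funext i
      fin_cases i <;> simp [Fin.sum_univ_two, lhpVertexR, Fin.snoc] <;> field_simp <;> ring

theorem lhpCone_two_interior_iff (s₁ s₂ : ℤ) (h₁ : 0 < s₁) (h₂ : 0 < s₂) (x : Fin 3 → ℝ) :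
    x ∈ interior (lhpCone 2 ![s₁, s₂]) ↔
      0 < x 0 ∧ (s₂ : ℝ) * x 0 < s₁ * x 1 ∧ x 1 < s₂ * x 2 := by
  have p₁ : (1 : ℝ) ≤ s₁ := by exact_mod_cast h₁
  have p₂ : (1 : ℝ) ≤ s₂ := by exact_mod_cast h₂
  constructor
  · intro hx
    have hcont : Continuous (fun t : ℝ => x - t • (![1, (s₂ : ℝ) + 1, 3] : Fin 3 → ℝ)) := by
      fun_prop
    have hmem : ∀ᶠ t in nhds (0 : ℝ),
        x - t • (![1, (s₂ : ℝ) + 1, 3] : Fin 3 → ℝ) ∈ lhpCone 2 ![s₁, s₂] := by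
      apply hcont.continuousAt.eventually_mem
      simpa using mem_interior_iff_mem_nhds.mp hx
    obtain ⟨t, ht, htpos⟩ :=
      ((hmem.filter_mono nhdsWithin_le_nhds).and
        (self_mem_nhdsWithin : Set.Ioi (0 : ℝ) ∈ nhdsWithin 0 (Set.Ioi 0))).exists
    have htp : 0 < t := htpos
    rw [lhpCone_two_iff s₁ s₂ h₁ h₂] at ht
    simp at ht
    obtain ⟨ha, hb, hc⟩ := ht
    refine ⟨by linarith, ?_, ?_⟩
    · nlinarith [mul_nonneg htp.le (mul_nonneg (sub_nonneg.2 p₁) (by linarith : (0 : ℝ) ≤ s₂))]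
    · nlinarith
  · intro h
    refine mem_interior.mpr
      ⟨{x : Fin 3 → ℝ | 0 < x 0 ∧ (s₂ : ℝ) * x 0 < s₁ * x 1 ∧ x 1 < s₂ * x 2}, ?_, ?_, h⟩
    · rintro y ⟨ha, hb, hc⟩
      exact (lhpCone_two_iff s₁ s₂ h₁ h₂ y).2 ⟨ha.le, hb.le, hc.le⟩
    · apply IsOpen.and
      · exact isOpen_lt (by fun_prop) (by fun_prop)
      · exact (isOpen_lt (by fun_prop) (by fun_prop)).and (isOpen_lt (by fun_prop) (by fun_prop))

theorem lhpConeZ_two_iff (s₁ s₂ : ℤ) (h₁ : 0 < s₁) (h₂ : 0 < s₂) (x : Fin 3 → ℤ) :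
    x ∈ lhpConeZ 2 ![s₁, s₂] ↔ lhpTwoCone s₁ s₂ (x 0) (x 1) (x 2) := by
  refine (lhpCone_two_iff s₁ s₂ h₁ h₂ _).trans ?_
  unfold lhpTwoCone
  norm_cast

theorem lhpConeInteriorZ_two_iff (s₁ s₂ : ℤ) (h₁ : 0 < s₁) (h₂ : 0 < s₂) (x : Fin 3 → ℤ) :
    x ∈ lhpConeInteriorZ 2 ![s₁, s₂] ↔ lhpTwoInt s₁ s₂ (x 0) (x 1) (x 2) := by
  refine (lhpCone_two_interior_iff s₁ s₂ h₁ h₂ _).trans ?_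
  unfold lhpTwoInt
  norm_cast

theorem lhpTwoInt_pos {s₁ s₂ x y z : ℤ} (h₁ : 0 < s₁) (h₂ : 0 < s₂)
    (h : lhpTwoInt s₁ s₂ x y z) : 0 < y ∧ 0 < z := by
  obtain ⟨ha, hb, hc⟩ := h
  have hy : 0 < y := by
    have := mul_pos h₂ ha
    exact pos_of_mul_pos_right (this.trans hb) h₁.le
  exact ⟨hy, pos_of_mul_pos_right (hy.trans hc) h₂.le⟩

/-- Degree two step, when there is an interior point of degree one. -/
theorem lhpTwo_step_two {s₁ s₂ x y : ℤ} (h₁ : 2 ≤ s₁) (h₂ : 2 ≤ s₂)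
    (hs : s₂ < s₁ * (s₂ - 1)) (hx : 0 < x) (hxy : s₂ * x < s₁ * y) (hy : y < s₂ * 2)
    (hys : s₂ ≤ y) (hxs : x ≤ s₁) :
    ∃ c d, lhpTwoInt s₁ s₂ c d 1 ∧ lhpTwoCone s₁ s₂ (x - c) (y - d) 1 := by
  unfold lhpTwoInt lhpTwoCone
  rcases lt_or_ge s₂ s₁ with hlt | hge
  · rcases eq_or_lt_of_le hys with heq | hgt
    · subst heq
      have hxs' : x < s₁ := by nlinarith
      have hdm := Int.mul_ediv_add_emod (s₁ - 1) s₂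
      have hm0 := Int.emod_nonneg (s₁ - 1) (by omega : s₂ ≠ 0)
      have hm1 := Int.emod_lt_of_pos (s₁ - 1) (by omega : 0 < s₂)
      set q := (s₁ - 1) / s₂
      have hq : 0 < q := by nlinarith
      rcases le_total x q with hxq | hxq
      · exact ⟨x, 1, ⟨hx, by nlinarith, by omega⟩, by omega, by nlinarith, by omega⟩
      · exact ⟨q, 1, ⟨hq, by nlinarith, by omega⟩, by omega, by nlinarith, by omega⟩
    · exact ⟨1, y - s₂, ⟨by omega, by nlinarith, by omega⟩, by omega, by nlinarith, by omega⟩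
  · have hdm := Int.mul_ediv_add_emod s₂ s₁
    have hm0 := Int.emod_nonneg s₂ (by omega : s₁ ≠ 0)
    have hm1 := Int.emod_lt_of_pos s₂ (by omega : 0 < s₁)
    set f := s₂ / s₁
    have hf : f < s₂ - 1 := by nlinarith
    rcases le_total (f + 1) (y - s₂) with hfy | hfy
    · exact ⟨1, y - s₂, ⟨by omega, by nlinarith, by omega⟩, by omega, by nlinarith, by omega⟩
    · refine ⟨1, f + 1, ⟨by omega, by nlinarith, by omega⟩, by omega, ?_, by omega⟩
      rcases eq_or_lt_of_le hxs with heq | hlt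
      · have : s₂ + 1 ≤ y := by subst heq; nlinarith
        subst heq
        nlinarith
      · nlinarith

theorem lhpTwo_step {s₁ s₂ x y z : ℤ} (h₁ : 0 < s₁) (h₂ : 0 < s₂)
    (h : lhpTwoInt s₁ s₂ x y z) (hex : ∃ x' y' z', z' < z ∧ lhpTwoInt s₁ s₂ x' y' z') :
    ∃ c d, lhpTwoInt s₁ s₂ c d (z - 1) ∧ lhpTwoCone s₁ s₂ (x - c) (y - d) 1 := by
  obtain ⟨x', y', z', hz', h'⟩ := hex
  have hp := lhpTwoInt_pos h₁ h₂ h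
  have hp' := lhpTwoInt_pos h₁ h₂ h'
  obtain ⟨ha, hb, hc⟩ := h
  obtain ⟨ha', hb', hc'⟩ := h'
  rcases lt_or_ge y (s₂ * (z - 1)) with hlt | hge
  · exact ⟨x, y, ⟨ha, hb, hlt⟩, by omega, by simp, by omega⟩
  rcases lt_or_ge s₁ x with hx | hx
  · exact ⟨x - s₁, y - s₂, ⟨by omega, by nlinarith, by linarith⟩, by omega, by nlinarith, by omega⟩
  have hz2 : 2 ≤ z := by omega
  rcases eq_or_lt_of_le hz2 with hz | hz
  · subst hz
    have hz1 : z' = 1 := by omega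
    subst hz1
    have hs2 : 2 ≤ s₂ := by omega
    have hs : s₂ < s₁ * (s₂ - 1) := by nlinarith
    have hs1 : 2 ≤ s₁ := by nlinarith
    exact lhpTwo_step_two hs1 hs2 hs ha hb (by linarith) (by linarith) hx
  · by_cases hg : s₂ < s₁ * (y - s₂)
    · exact ⟨1, y - s₂, ⟨by omega, by linarith, by linarith⟩, by omega, by nlinarith, by omega⟩
    · have hy2 : 2 * s₂ ≤ y := by nlinarith
      have hs1 : s₁ = 1 := by nlinarith
      subst hs1
      have hy : y = 2 * s₂ := by omega
      have hx1 : x = 1 := by omega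
      subst hy
      subst hx1
      have hz3 : z = 3 := by nlinarith
      subst hz3
      have hs2 : 2 ≤ s₂ := by
        by_contra hcon
        have : s₂ = 1 := by omega
        subst this
        omega
      exact ⟨1, 2 * s₂ - 1, ⟨by omega, by omega, by omega⟩, by omega, by omega, by omega⟩

theorem lhpTwoInt_add {s₁ s₂ x y z x' y' z' : ℤ} (h : lhpTwoInt s₁ s₂ x y z)
    (h' : lhpTwoCone s₁ s₂ x' y' z') : lhpTwoInt s₁ s₂ (x + x') (y + y') (z + z') := by
  obtain ⟨a, b, c⟩ := h
  obtain ⟨a', b', c'⟩ := h'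
  exact ⟨by linarith, by linarith, by linarith⟩

theorem lhpTwoCone_add {s₁ s₂ x y z x' y' z' : ℤ} (h : lhpTwoCone s₁ s₂ x y z)
    (h' : lhpTwoCone s₁ s₂ x' y' z') : lhpTwoCone s₁ s₂ (x + x') (y + y') (z + z') := by
  obtain ⟨a, b, c⟩ := h
  obtain ⟨a', b', c'⟩ := h'
  exact ⟨by linarith, by linarith, by linarith⟩

theorem lhpTwo_descend {s₁ s₂ : ℤ} (h₁ : 0 < s₁) (h₂ : 0 < s₂) (k : ℤ)
    (hk : ∃ x y, lhpTwoInt s₁ s₂ x y k) (m : ℕ) :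
    ∀ x y, lhpTwoInt s₁ s₂ x y (k + m) →
      ∃ c d, lhpTwoInt s₁ s₂ c d k ∧ lhpTwoCone s₁ s₂ (x - c) (y - d) m := by
  induction m with
  | zero =>
    intro x y h
    refine ⟨x, y, by simpa using h, ?_⟩
    simp [lhpTwoCone]
  | succ m ih =>
    intro x y h
    obtain ⟨x', y', hk'⟩ := hk
    obtain ⟨c, d, hcd, hcone⟩ := lhpTwo_step h₁ h₂ h ⟨x', y', k, by push_cast; omega, hk'⟩
    have e : k + ((m + 1 : ℕ) : ℤ) - 1 = k + m := by push_cast; ring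
    rw [e] at hcd
    obtain ⟨c', d', hcd', hcone'⟩ := ih c d hcd
    refine ⟨c', d', hcd', ?_⟩
    have := lhpTwoCone_add hcone hcone'
    have e1 : x - c + (c - c') = x - c' := by ring
    have e2 : y - d + (d - d') = y - d' := by ring
    have e3 : 1 + (m : ℤ) = ((m + 1 : ℕ) : ℤ) := by push_cast; ring
    rwa [e1, e2, e3] at this

theorem lhp_dim_two_level (s₁ s₂ : ℤ) (h₁ : 0 < s₁) (h₂ : 0 < s₂) :
    IsLevel 2 ![s₁, s₂] := by
  classical
  have hexists : ∃ k : ℕ, ∃ x y, lhpTwoInt s₁ s₂ x y k :=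
    ⟨3, 1, s₂ + 1, by omega, by nlinarith, by push_cast; omega⟩
  set k := Nat.find hexists with hkdef
  have hk : ∃ x y, lhpTwoInt s₁ s₂ x y k := Nat.find_spec hexists
  have hmin : ∀ x y z, lhpTwoInt s₁ s₂ x y z → (k : ℤ) ≤ z := by
    intro x y z h
    have hz := (lhpTwoInt_pos h₁ h₂ h).2
    lift z to ℕ using hz.le
    exact_mod_cast Nat.find_min' hexists ⟨x, y, h⟩
  have hfin : {v : Fin 3 → ℤ | lhpTwoInt s₁ s₂ (v 0) (v 1) (v 2) ∧ v 2 = k}.Finite := by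
    apply (Set.finite_Icc (![0, 0, (k : ℤ)] : Fin 3 → ℤ) ![s₁ * (s₂ * k), s₂ * k, k]).subset
    rintro v ⟨hv, hvk⟩
    have hp := lhpTwoInt_pos h₁ h₂ hv
    obtain ⟨a, b, c⟩ := hv
    rw [hvk] at c
    have hx : v 0 ≤ s₁ * (s₂ * k) := by
      have : s₁ * v 1 ≤ s₁ * (s₂ * k) := mul_le_mul_of_nonneg_left c.le h₁.le
      nlinarith
    constructor
    · intro i
      fin_cases i
      · exact a.le
      · exact hp.1.le
      · exact hvk.ge
    · intro i
      fin_cases i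
      · exact hx
      · exact c.le
      · exact hvk.le
  refine ⟨hfin.toFinset, ?_, ?_, ?_⟩
  · obtain ⟨x, y, h⟩ := hk
    exact ⟨![x, y, k], by simpa using h⟩
  · intro c hc c' hc'
    have e := ((Set.Finite.mem_toFinset hfin).1 hc).2
    have e' := ((Set.Finite.mem_toFinset hfin).1 hc').2
    exact e.trans e'.symm
  · ext v
    rw [lhpConeInteriorZ_two_iff s₁ s₂ h₁ h₂]
    simp only [Set.mem_iUnion, Set.mem_image, exists_prop]
    constructor
    · rintro ⟨c, hc, w, hw, rfl⟩
      have hc1 := ((Set.Finite.mem_toFinset hfin).1 hc).1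
      exact lhpTwoInt_add hc1 ((lhpConeZ_two_iff s₁ s₂ h₁ h₂ w).1 hw)
    · intro hv
      obtain ⟨m, hm⟩ := Int.le.dest (hmin _ _ _ hv)
      rw [← hm] at hv
      obtain ⟨c, d, hcd, hcone⟩ := lhpTwo_descend h₁ h₂ k hk m _ _ hv
      refine ⟨![c, d, k], (Set.Finite.mem_toFinset hfin).2 ⟨by simpa using hcd, rfl⟩,
        ![v 0 - c, v 1 - d, m], (lhpConeZ_two_iff s₁ s₂ h₁ h₂ _).2 (by simpa using hcone), ?_⟩
      funext i
      fin_cases i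
      · simp
      · simp
      · simpa using hm
end

section
/- Let s = (s_1,…,s_n) be a sequence of positive integers. The s-lecture hall polytope P_n^(s) is level if and only if the (1,s_1,…,s_n)-lecture hall polytope P_{n+1}^{(1,s)} is level. -/
open scoped BigOperators

/-- The linear form `(s, 1)` used to shear the cone of `(1, s)`. -/
def shearVec (n : ℕ) (s : Fin n → ℤ) : Fin (n + 1) → ℤ := Fin.snoc s 1

theorem comb_zero (n : ℕ) (s : Fin n → ℤ) (a : ℝ) (b : Fin (n + 1) → ℝ) :
    (a • (Fin.snoc (0 : Fin (n + 1) → ℝ) 1 : Fin (n + 2) → ℝ) +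
        ∑ i : Fin (n + 1), b i •
          (Fin.snoc (lhpVertexR (n + 1) (Fin.cons 1 s) i) 1 : Fin (n + 2) → ℝ)) 0 = b 0 := by
  have h0 : (0 : Fin (n + 2)) = Fin.castSucc (0 : Fin (n + 1)) := rfl
  simp only [Pi.add_apply, Pi.smul_apply, Finset.sum_apply, smul_eq_mul]
  rw [h0]
  simp only [Fin.snoc_castSucc]
  rw [Fin.sum_univ_succ]
  simp [lhpVertexR]

theorem comb_succ (n : ℕ) (s : Fin n → ℤ) (a : ℝ) (b : Fin (n + 1) → ℝ) (j : Fin (n + 1)) :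
    (a • (Fin.snoc (0 : Fin (n + 1) → ℝ) 1 : Fin (n + 2) → ℝ) +
        ∑ i : Fin (n + 1), b i •
          (Fin.snoc (lhpVertexR (n + 1) (Fin.cons 1 s) i) 1 : Fin (n + 2) → ℝ)) j.succ =
      b 0 * (shearVec n s j : ℝ) +
      (a • (Fin.snoc (0 : Fin n → ℝ) 1 : Fin (n + 1) → ℝ) +
        ∑ i : Fin n, b i.succ • (Fin.snoc (lhpVertexR n s i) 1 : Fin (n + 1) → ℝ)) j := by
  simp only [Pi.add_apply, Pi.smul_apply, Finset.sum_apply, smul_eq_mul]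
  refine Fin.lastCases ?_ (fun k => ?_) j
  · rw [Fin.succ_last]
    simp only [Fin.snoc_last, shearVec]
    rw [Fin.sum_univ_succ]
    push_cast
    ring
  · rw [Fin.succ_castSucc]
    simp only [Fin.snoc_castSucc, shearVec]
    rw [Fin.sum_univ_succ]
    simp [lhpVertexR, Fin.succ_le_succ_iff]

theorem mem_cone_cons (n : ℕ) (s : Fin n → ℤ) (x : Fin (n + 2) → ℝ) :
    x ∈ lhpCone (n + 1) (Fin.cons 1 s) ↔
      0 ≤ x 0 ∧ (fun i : Fin (n + 1) => x i.succ - x 0 * (shearVec n s i : ℝ)) ∈ lhpCone n s := by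
  constructor
  · rintro ⟨a, b, ha, hb, rfl⟩
    refine ⟨?_, a, fun i => b i.succ, ha, fun i => hb _, ?_⟩
    · rw [comb_zero]; exact hb 0
    · funext j
      rw [comb_zero, comb_succ]
      ring
  · rintro ⟨h0, a, b, ha, hb, h⟩
    refine ⟨a, Fin.cons (x 0) b, ha, ?_, ?_⟩
    · intro i
      refine Fin.cases ?_ (fun k => ?_) i
      · simpa using h0
      · simpa using hb k
    · funext j
      refine Fin.cases ?_ (fun k => ?_) j
      · rw [comb_zero]; simp
      · rw [comb_succ]
        simp only [Fin.cons_zero, Fin.cons_succ]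
        have := congrFun h k
        rw [← this]
        ring

/-- The shear `(y, x, k) ↦ (y, (x, k) - y (s, 1))` as a homeomorphism. -/
def shearHomeo (n : ℕ) (s : Fin n → ℤ) :
    (Fin (n + 2) → ℝ) ≃ₜ ℝ × (Fin (n + 1) → ℝ) where
  toFun x := (x 0, fun i => x i.succ - x 0 * (shearVec n s i : ℝ))
  invFun p := Fin.cons p.1 (fun i => p.2 i + p.1 * (shearVec n s i : ℝ))
  left_inv x := by
    funext j
    refine Fin.cases ?_ (fun k => ?_) j <;> simp
  right_inv p := by
    ext <;> simp
  continuous_toFun := by fun_prop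
  continuous_invFun := by
    refine continuous_pi fun j => ?_
    refine Fin.cases ?_ (fun k => ?_) j
    · simp only [Fin.cons_zero]; fun_prop
    · simp only [Fin.cons_succ]; fun_prop

theorem mem_interior_cone_cons (n : ℕ) (s : Fin n → ℤ) (x : Fin (n + 2) → ℝ) :
    x ∈ interior (lhpCone (n + 1) (Fin.cons 1 s)) ↔
      0 < x 0 ∧ (fun i : Fin (n + 1) => x i.succ - x 0 * (shearVec n s i : ℝ)) ∈
        interior (lhpCone n s) := by
  have h : lhpCone (n + 1) (Fin.cons 1 s) =
      shearHomeo n s ⁻¹' (Set.Ici (0 : ℝ) ×ˢ lhpCone n s) := by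
    ext x
    rw [mem_cone_cons]
    rfl
  rw [h, ← Homeomorph.preimage_interior, interior_prod_eq, interior_Ici]
  rfl

/-- Integer projection. -/
def projZ (n : ℕ) (s : Fin n → ℤ) (x : Fin (n + 2) → ℤ) : Fin (n + 1) → ℤ :=
  fun i => x i.succ - x 0 * shearVec n s i

/-- Integer lift. -/
def liftZ (n : ℕ) (s : Fin n → ℤ) (y : ℤ) (p : Fin (n + 1) → ℤ) : Fin (n + 2) → ℤ :=
  Fin.cons y (fun i => p i + y * shearVec n s i)

theorem liftZ_zero (n : ℕ) (s : Fin n → ℤ) (y : ℤ) (p : Fin (n + 1) → ℤ) :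
    liftZ n s y p 0 = y := rfl

theorem projZ_liftZ (n : ℕ) (s : Fin n → ℤ) (y : ℤ) (p : Fin (n + 1) → ℤ) :
    projZ n s (liftZ n s y p) = p := by
  funext i
  simp [projZ, liftZ]

theorem liftZ_projZ (n : ℕ) (s : Fin n → ℤ) (x : Fin (n + 2) → ℤ) :
    liftZ n s (x 0) (projZ n s x) = x := by
  funext j
  refine Fin.cases ?_ (fun k => ?_) j <;> simp [projZ, liftZ]

theorem liftZ_add (n : ℕ) (s : Fin n → ℤ) (y z : ℤ) (p q : Fin (n + 1) → ℤ) :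
    liftZ n s y p + liftZ n s z q = liftZ n s (y + z) (p + q) := by
  funext j
  refine Fin.cases ?_ (fun k => ?_) j
  · simp [liftZ]
  · simp [liftZ]; ring

theorem projZ_add (n : ℕ) (s : Fin n → ℤ) (x z : Fin (n + 2) → ℤ) :
    projZ n s (x + z) = projZ n s x + projZ n s z := by
  funext i
  simp [projZ]; ring

theorem projZ_last (n : ℕ) (s : Fin n → ℤ) (x : Fin (n + 2) → ℤ) :
    projZ n s x (Fin.last n) = x (Fin.last (n + 1)) - x 0 := by
  simp [projZ, shearVec]

theorem liftZ_last (n : ℕ) (s : Fin n → ℤ) (y : ℤ) (p : Fin (n + 1) → ℤ) :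
    liftZ n s y p (Fin.last (n + 1)) = p (Fin.last n) + y := by
  rw [← Fin.succ_last]
  simp [liftZ, shearVec]

theorem mem_coneZ_cons (n : ℕ) (s : Fin n → ℤ) (x : Fin (n + 2) → ℤ) :
    x ∈ lhpConeZ (n + 1) (Fin.cons 1 s) ↔ 0 ≤ x 0 ∧ projZ n s x ∈ lhpConeZ n s := by
  simp only [lhpConeZ, Set.mem_setOf_eq, mem_cone_cons, projZ]
  push_cast
  simp

theorem mem_intZ_cons (n : ℕ) (s : Fin n → ℤ) (x : Fin (n + 2) → ℤ) :
    x ∈ lhpConeInteriorZ (n + 1) (Fin.cons 1 s) ↔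
      0 < x 0 ∧ projZ n s x ∈ lhpConeInteriorZ n s := by
  simp only [lhpConeInteriorZ, Set.mem_setOf_eq, mem_interior_cone_cons, projZ]
  push_cast
  simp

theorem zero_mem_coneZ (n : ℕ) (s : Fin n → ℤ) : (0 : Fin (n + 1) → ℤ) ∈ lhpConeZ n s := by
  refine ⟨0, 0, le_rfl, fun _ => le_rfl, ?_⟩
  funext i
  simp

theorem mem_union_iff (n : ℕ) (s : Fin n → ℤ) (C : Finset (Fin (n + 1) → ℤ))
    (x : Fin (n + 1) → ℤ) :
    x ∈ (⋃ c ∈ C, (fun x => c + x) '' lhpConeZ n s) ↔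
      ∃ c ∈ C, ∃ z ∈ lhpConeZ n s, c + z = x := by
  simp only [Set.mem_iUnion, Set.mem_image, exists_prop]

theorem lhp_level_iff_cons_one (n : ℕ) (s : Fin n → ℤ) (hs : ∀ i, 0 < s i) :
    IsLevel n s ↔ IsLevel (n + 1) (Fin.cons 1 s) := by
  classical
  constructor
  · rintro ⟨C, hne, hlast, hU⟩
    have hU' : ∀ x, (∃ c ∈ C, ∃ z ∈ lhpConeZ n s, c + z = x) ↔ x ∈ lhpConeInteriorZ n s := by
      intro x; rw [← hU, mem_union_iff]
    refine ⟨C.image (liftZ n s 1), hne.image _, ?_, ?_⟩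
    · intro c hc c' hc'
      obtain ⟨d, hd, rfl⟩ := Finset.mem_image.1 hc
      obtain ⟨d', hd', rfl⟩ := Finset.mem_image.1 hc'
      rw [liftZ_last, liftZ_last, hlast d hd d' hd']
    · ext x
      rw [mem_union_iff, mem_intZ_cons, ← hU']
      constructor
      · rintro ⟨c, hc, z, hz, rfl⟩
        obtain ⟨d, hd, rfl⟩ := Finset.mem_image.1 hc
        rw [mem_coneZ_cons] at hz
        refine ⟨?_, d, hd, projZ n s z, hz.2, ?_⟩
        · rw [Pi.add_apply, liftZ_zero]; have := hz.1; omega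
        · rw [projZ_add, projZ_liftZ]
      · rintro ⟨h0, d, hd, z, hz, h⟩
        refine ⟨liftZ n s 1 d, Finset.mem_image_of_mem _ hd, liftZ n s (x 0 - 1) z, ?_, ?_⟩
        · rw [mem_coneZ_cons, projZ_liftZ, liftZ_zero]
          exact ⟨by omega, hz⟩
        · rw [liftZ_add, h, add_sub_cancel, liftZ_projZ]
  · rintro ⟨C, hne, hlast, hU⟩
    have hU' : ∀ x, (∃ c ∈ C, ∃ z ∈ lhpConeZ (n + 1) (Fin.cons 1 s), c + z = x) ↔
        x ∈ lhpConeInteriorZ (n + 1) (Fin.cons 1 s) := by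
      intro x; rw [← hU, mem_union_iff]
    have hCint : ∀ c ∈ C, 0 < c 0 ∧ projZ n s c ∈ lhpConeInteriorZ n s := by
      intro c hc
      rw [← mem_intZ_cons, ← hU']
      exact ⟨c, hc, 0, zero_mem_coneZ _ _, add_zero _⟩
    have key : ∀ p ∈ lhpConeInteriorZ n s, ∃ c ∈ C, c 0 = 1 ∧
        ∃ z ∈ lhpConeZ n s, projZ n s c + z = p := by
      intro p hp
      have h1 : liftZ n s 1 p ∈ lhpConeInteriorZ (n + 1) (Fin.cons 1 s) := by
        rw [mem_intZ_cons, projZ_liftZ, liftZ_zero]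
        exact ⟨one_pos, hp⟩
      obtain ⟨c, hc, z, hz, h⟩ := (hU' _).2 h1
      rw [mem_coneZ_cons] at hz
      have hc0 := (hCint c hc).1
      have h0 := congrFun h 0
      rw [Pi.add_apply, liftZ_zero] at h0
      refine ⟨c, hc, by have := hz.1; omega, projZ n s z, hz.2, ?_⟩
      rw [← projZ_add, h, projZ_liftZ]
    refine ⟨(C.filter fun c => c 0 = 1).image (projZ n s), ?_, ?_, ?_⟩
    · obtain ⟨c, hc⟩ := hne
      obtain ⟨d, hd, hd0, -⟩ := key _ (hCint c hc).2
      exact ⟨_, Finset.mem_image_of_mem _ (Finset.mem_filter.2 ⟨hd, hd0⟩)⟩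
    · intro c hc c' hc'
      obtain ⟨d, hd, rfl⟩ := Finset.mem_image.1 hc
      obtain ⟨d', hd', rfl⟩ := Finset.mem_image.1 hc'
      rw [Finset.mem_filter] at hd hd'
      rw [projZ_last, projZ_last, hlast d hd.1 d' hd'.1, hd.2, hd'.2]
    · ext p
      rw [mem_union_iff]
      constructor
      · rintro ⟨c, hc, z, hz, rfl⟩
        obtain ⟨d, hd, rfl⟩ := Finset.mem_image.1 hc
        rw [Finset.mem_filter] at hd
        have h1 : d + liftZ n s 0 z ∈ lhpConeInteriorZ (n + 1) (Fin.cons 1 s) := by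
          rw [← hU']
          refine ⟨d, hd.1, _, ?_, rfl⟩
          rw [mem_coneZ_cons, projZ_liftZ, liftZ_zero]
          exact ⟨le_rfl, hz⟩
        rw [mem_intZ_cons, projZ_add, projZ_liftZ] at h1
        exact h1.2
      · intro hp
        obtain ⟨c, hc, hc0, z, hz, h⟩ := key p hp
        exact ⟨_, Finset.mem_image_of_mem _ (Finset.mem_filter.2 ⟨hc, hc0⟩), z, hz, h⟩
end

section
/- Let s = (s_1,…,s_n) be a sequence of positive integers. The s-lecture hall polytope P_n^(s) is level if and only if the (s_1,…,s_n,1)-lecture hall polytope P_{n+1}^{(s,1)} is level. -/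
open scoped BigOperators

theorem mem_cone_snoc (n : ℕ) (s : Fin n → ℤ) (x : Fin (n + 2) → ℝ) :
    x ∈ lhpCone (n + 1) (Fin.snoc s 1) ↔
      (fun i : Fin (n + 1) => x i.castSucc) ∈ lhpCone n s ∧
        x (Fin.last n).castSucc ≤ x (Fin.last (n + 1)) := by
  unfold lhpCone
  simp only [Set.mem_ofPred_eq]
  constructor
  · rintro ⟨a, b, ha, hb, rfl⟩
    refine ⟨⟨b (Fin.last n), fun i => b i.castSucc, hb _, fun i => hb _, ?_⟩, ?_⟩
    · funext j
      refine Fin.lastCases ?_ (fun j => ?_) j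
      · simp [Fin.sum_univ_castSucc, lhpVertexR, Fin.le_last]
        ring
      · simp [Fin.sum_univ_castSucc, lhpVertexR, Fin.last_le_iff, Fin.castSucc_ne_last]
    · simp [Fin.sum_univ_castSucc, lhpVertexR, Fin.le_last, ha]
  · rintro ⟨⟨a, b, ha, hb, h⟩, hle⟩
    refine ⟨x (Fin.last (n + 1)) - x (Fin.last n).castSucc, Fin.snoc b a, by linarith, ?_, ?_⟩
    · intro i
      refine Fin.lastCases ?_ (fun j => ?_) i
      · simpa using ha
      · simpa using hb j
    · have h1 := congrFun h (Fin.last n)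
      simp at h1
      funext j
      refine Fin.lastCases ?_ (fun j => ?_) j
      · simp [Fin.sum_univ_castSucc]
        linarith
      · have hj := congrFun h j
        rw [hj]
        refine Fin.lastCases ?_ (fun j => ?_) j
        · simp [Fin.sum_univ_castSucc, lhpVertexR, Fin.le_last]
          ring
        · simp [Fin.sum_univ_castSucc, lhpVertexR, Fin.last_le_iff, Fin.castSucc_ne_last]

theorem interior_cone_snoc (n : ℕ) (s : Fin n → ℤ) (x : Fin (n + 2) → ℝ) :
    x ∈ interior (lhpCone (n + 1) (Fin.snoc s 1)) ↔
      (fun i : Fin (n + 1) => x i.castSucc) ∈ interior (lhpCone n s) ∧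
        x (Fin.last n).castSucc < x (Fin.last (n + 1)) := by
  let f : (Fin (n + 2) → ℝ) →L[ℝ] (Fin (n + 1) → ℝ) :=
    ContinuousLinearMap.pi fun i => ContinuousLinearMap.proj i.castSucc
  let g : (Fin (n + 2) → ℝ) →L[ℝ] ℝ :=
    (ContinuousLinearMap.proj (R := ℝ) (φ := fun _ : Fin (n + 2) => ℝ) (Fin.last (n + 1))) -
      (ContinuousLinearMap.proj (R := ℝ) (φ := fun _ : Fin (n + 2) => ℝ) (Fin.last n).castSucc)
  have hf : IsOpenMap f := f.isOpenMap (fun y => ⟨Fin.snoc y 0, by funext i; simp [f]⟩)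
  have hg : IsOpenMap g := g.isOpenMap (fun y => ⟨Fin.snoc 0 y, by simp [g]⟩)
  have e : lhpCone (n + 1) (Fin.snoc s 1) = f ⁻¹' (lhpCone n s) ∩ g ⁻¹' (Set.Ici 0) := by
    ext x
    rw [mem_cone_snoc]
    simp [f, g]
  rw [e, interior_inter, ← hf.preimage_interior_eq_interior_preimage f.continuous,
    ← hg.preimage_interior_eq_interior_preimage g.continuous, interior_Ici]
  simp [f, g]

theorem coneZ_snoc (n : ℕ) (s : Fin n → ℤ) (w : Fin (n + 1) → ℤ) (z : ℤ) :
    (Fin.snoc w z : Fin (n + 2) → ℤ) ∈ lhpConeZ (n + 1) (Fin.snoc s 1) ↔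
      w ∈ lhpConeZ n s ∧ w (Fin.last n) ≤ z := by
  simp [lhpConeZ, mem_cone_snoc]

theorem intZ_snoc (n : ℕ) (s : Fin n → ℤ) (w : Fin (n + 1) → ℤ) (z : ℤ) :
    (Fin.snoc w z : Fin (n + 2) → ℤ) ∈ lhpConeInteriorZ (n + 1) (Fin.snoc s 1) ↔
      w ∈ lhpConeInteriorZ n s ∧ w (Fin.last n) < z := by
  simp [lhpConeInteriorZ, interior_cone_snoc]

theorem snoc_add_snoc (n : ℕ) (w v : Fin (n + 1) → ℤ) (z y : ℤ) :
    (Fin.snoc w z : Fin (n + 2) → ℤ) + (Fin.snoc v y : Fin (n + 2) → ℤ)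
      = (Fin.snoc (w + v) (z + y) : Fin (n + 2) → ℤ) := by
  funext j
  refine Fin.lastCases ?_ (fun j => ?_) j <;> simp

theorem exists_snoc (n : ℕ) (x : Fin (n + 2) → ℤ) :
    ∃ (w : Fin (n + 1) → ℤ) (z : ℤ), x = (Fin.snoc w z : Fin (n + 2) → ℤ) :=
  ⟨fun i => x i.castSucc, x (Fin.last _), by
    funext j
    refine Fin.lastCases ?_ (fun j => ?_) j <;> simp⟩

theorem snoc_inj' (n : ℕ) (w v : Fin (n + 1) → ℤ) (z y : ℤ)
    (h : (Fin.snoc w z : Fin (n + 2) → ℤ) = (Fin.snoc v y : Fin (n + 2) → ℤ)) :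
    w = v ∧ z = y := by
  constructor
  · funext i
    simpa using congrFun h i.castSucc
  · simpa using congrFun h (Fin.last _)

/-- A reformulation of levelness. -/
theorem isLevel_iff (n : ℕ) (s : Fin n → ℤ) : IsLevel n s ↔
    ∃ (C : Finset (Fin (n + 1) → ℤ)) (d : ℤ), C.Nonempty ∧ (∀ c ∈ C, c (Fin.last n) = d) ∧
      (∀ c ∈ C, ∀ k ∈ lhpConeZ n s, c + k ∈ lhpConeInteriorZ n s) ∧
      (∀ w ∈ lhpConeInteriorZ n s, ∃ c ∈ C, ∃ k ∈ lhpConeZ n s, c + k = w) := by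
  constructor
  · rintro ⟨C, ⟨c₀, hc₀⟩, h, e⟩
    refine ⟨C, c₀ (Fin.last n), ⟨c₀, hc₀⟩, fun c hc => h c hc c₀ hc₀, ?_, ?_⟩
    · intro c hc k hk
      rw [← e]
      exact Set.mem_biUnion hc ⟨k, hk, rfl⟩
    · intro w hw
      rw [← e] at hw
      simp only [Set.mem_iUnion, Set.mem_image] at hw
      obtain ⟨c, hc, k, hk, e⟩ := hw
      exact ⟨c, hc, k, hk, e⟩
  · rintro ⟨C, d, hC, hd, h1, h2⟩
    refine ⟨C, hC, fun c hc c' hc' => (hd c hc).trans (hd c' hc').symm, ?_⟩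
    ext w
    constructor
    · intro hw
      simp only [Set.mem_iUnion, Set.mem_image] at hw
      obtain ⟨c, hc, k, hk, rfl⟩ := hw
      exact h1 c hc k hk
    · intro hw
      obtain ⟨c, hc, k, hk, e⟩ := h2 w hw
      exact Set.mem_biUnion hc ⟨k, hk, e⟩

theorem lhp_level_iff_snoc_one (n : ℕ) (s : Fin n → ℤ) (hs : ∀ i, 0 < s i) :
    IsLevel n s ↔ IsLevel (n + 1) (Fin.snoc s 1) := by
  classical
  rw [isLevel_iff, isLevel_iff]
  constructor
  · rintro ⟨C, d, hC, hd, h1, h2⟩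
    refine ⟨C.image (fun c => (Fin.snoc c (d + 1) : Fin (n + 2) → ℤ)), d + 1, hC.image _,
      ?_, ?_, ?_⟩
    · simp
    · intro c' hc' k' hk'
      obtain ⟨c, hc, rfl⟩ := Finset.mem_image.1 hc'
      obtain ⟨k, z, rfl⟩ := exists_snoc n k'
      rw [coneZ_snoc] at hk'
      rw [snoc_add_snoc, intZ_snoc]
      refine ⟨h1 c hc k hk'.1, ?_⟩
      have := hd c hc
      simp only [Pi.add_apply]
      linarith [hk'.2]
    · intro w' hw'
      obtain ⟨w, z, rfl⟩ := exists_snoc n w'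
      rw [intZ_snoc] at hw'
      obtain ⟨c, hc, k, hk, rfl⟩ := h2 w hw'.1
      have h3 := hw'.2
      have := hd c hc
      simp only [Pi.add_apply] at h3
      refine ⟨_, Finset.mem_image_of_mem _ hc, Fin.snoc k (z - (d + 1)), ?_, ?_⟩
      · rw [coneZ_snoc]
        exact ⟨hk, by omega⟩
      · rw [snoc_add_snoc]
        congr 1
        omega
  · rintro ⟨C, d, ⟨c₀, hc₀⟩, hd, h1, h2⟩
    have key : ∀ w ∈ lhpConeInteriorZ n s, ∃ c : Fin (n + 1) → ℤ,
        (Fin.snoc c d : Fin (n + 2) → ℤ) ∈ C ∧ c (Fin.last n) = d - 1 ∧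
        ∃ k ∈ lhpConeZ n s, c + k = w := by
      intro w hw
      obtain ⟨c', hc', k', hk', e⟩ := h2 (Fin.snoc w (w (Fin.last n) + 1))
        ((intZ_snoc _ _ _ _).2 ⟨hw, by omega⟩)
      obtain ⟨c, y, rfl⟩ := exists_snoc n c'
      obtain ⟨k, z, rfl⟩ := exists_snoc n k'
      have hy := hd _ hc'
      simp only [Fin.snoc_last] at hy
      subst hy
      rw [snoc_add_snoc] at e
      obtain ⟨e1, e2⟩ := snoc_inj' _ _ _ _ _ e
      have h3 := h1 _ hc' 0 (zero_mem_coneZ _ _)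
      rw [add_zero, intZ_snoc] at h3
      rw [coneZ_snoc] at hk'
      have e3 := congrFun e1 (Fin.last n)
      simp only [Pi.add_apply] at e3
      exact ⟨c, hc', by omega, k, hk'.1, e1⟩
    let F : Finset (Fin (n + 1) → ℤ) :=
      (C.image (fun c (i : Fin (n + 1)) => c i.castSucc)).filter
        (fun c => (Fin.snoc c d : Fin (n + 2) → ℤ) ∈ C ∧ c (Fin.last n) = d - 1)
    have hF : ∀ c, c ∈ F ↔ (Fin.snoc c d : Fin (n + 2) → ℤ) ∈ C ∧ c (Fin.last n) = d - 1 := by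
      intro c
      simp only [F, Finset.mem_filter, Finset.mem_image, and_iff_right_iff_imp]
      rintro ⟨hc, -⟩
      exact ⟨_, hc, by simp⟩
    refine ⟨F, d - 1, ?_, fun c hc => ((hF c).1 hc).2, ?_, ?_⟩
    · obtain ⟨w, z, rfl⟩ := exists_snoc n c₀
      have h3 := h1 _ hc₀ 0 (zero_mem_coneZ _ _)
      rw [add_zero, intZ_snoc] at h3
      obtain ⟨c, hc, hc2, -⟩ := key w h3.1
      exact ⟨c, (hF c).2 ⟨hc, hc2⟩⟩
    · intro c hc k hk
      have h3 := h1 _ ((hF c).1 hc).1 (Fin.snoc k (k (Fin.last n)))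
        ((coneZ_snoc _ _ _ _).2 ⟨hk, le_rfl⟩)
      rw [snoc_add_snoc, intZ_snoc] at h3
      exact h3.1
    · intro w hw
      obtain ⟨c, hc, hc2, h⟩ := key w hw
      exact ⟨c, (hF c).2 ⟨hc, hc2⟩, h⟩
end

section
/- Let s = (s_1,…,s_n) and t = (t_1,…,t_m) be sequences of positive integers. If both P_n^(s) and P_m^(t) are level, then the (s_1,…,s_n,1,t_1,…,t_m)-lecture hall polytope P_{n+m+1}^{(s,1,t)} is level. -/
open scoped BigOperators

noncomputable section

/-- Nonnegative-combination point. -/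
def ptc (n : ℕ) (s : Fin n → ℤ) (a : ℝ) (b : Fin n → ℝ) : Fin (n + 1) → ℝ :=
  a • (Fin.snoc (0 : Fin n → ℝ) 1 : Fin (n + 1) → ℝ) +
        ∑ i : Fin n, b i • (Fin.snoc (lhpVertexR n s i) 1 : Fin (n + 1) → ℝ)

lemma ptc_last (n : ℕ) (s : Fin n → ℤ) (a : ℝ) (b : Fin n → ℝ) :
    ptc n s a b (Fin.last n) = a + ∑ i, b i := by
  simp [ptc]

lemma ptc_castSucc (n : ℕ) (s : Fin n → ℤ) (a : ℝ) (b : Fin n → ℝ) (j : Fin n) :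
    ptc n s a b j.castSucc = (∑ i, if i ≤ j then b i else 0) * s j := by
  simp [ptc, lhpVertexR, Finset.sum_mul]

/-- Glue points of the two cones. -/
def glue {R : Type*} [CommRing R] {n m : ℕ} (t : Fin m → ℤ) (x : Fin (n + 1) → R)
    (z : Fin (m + 1) → R) : Fin (n + 1 + m + 1) → R :=
  Fin.append (m := n + 1) (n := m + 1) x
    (fun j => z j + x (Fin.last n) * (((Fin.snoc t 1 : Fin (m + 1) → ℤ) j : ℤ) : R))

/-- First part. -/
def partA {R : Type*} {n m : ℕ} (w : Fin (n + 1 + m + 1) → R) : Fin (n + 1) → R :=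
  fun i => w (Fin.castAdd (m + 1) i)

/-- Second part. -/
def partB {R : Type*} [CommRing R] {n m : ℕ} (t : Fin m → ℤ)
    (w : Fin (n + 1 + m + 1) → R) : Fin (m + 1) → R :=
  fun j => w (Fin.natAdd (n + 1) j) -
    w (Fin.castAdd (m + 1) (Fin.last n)) * (((Fin.snoc t 1 : Fin (m + 1) → ℤ) j : ℤ) : R)

section
variable {R : Type*} [CommRing R] {n m : ℕ} (t : Fin m → ℤ)

lemma glue_left (x : Fin (n + 1) → R) (z : Fin (m + 1) → R) (i : Fin (n + 1)) :
    glue t x z (Fin.castAdd (m + 1) i) = x i := by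
  unfold glue; exact Fin.append_left (m := n + 1) (n := m + 1) _ _ i

lemma glue_right (x : Fin (n + 1) → R) (z : Fin (m + 1) → R) (j : Fin (m + 1)) :
    glue t x z (Fin.natAdd (n + 1) j) =
      z j + x (Fin.last n) * (((Fin.snoc t 1 : Fin (m + 1) → ℤ) j : ℤ) : R) := by
  unfold glue; exact Fin.append_right (m := n + 1) (n := m + 1) _ _ j

lemma partA_glue (x : Fin (n + 1) → R) (z : Fin (m + 1) → R) : partA (glue t x z) = x := by
  ext i; exact glue_left t x z i

lemma partB_glue (x : Fin (n + 1) → R) (z : Fin (m + 1) → R) : partB t (glue t x z) = z := by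
  ext j; unfold partB; rw [glue_left, glue_right]; ring

lemma glue_part (w : Fin (n + 1 + m + 1) → R) : glue t (partA w) (partB t w) = w := by
  funext k
  refine Fin.addCases (m := n + 1) (n := m + 1) (fun i => ?_) (fun j => ?_) k
  · rw [glue_left]; rfl
  · rw [glue_right]; simp [partA, partB]

lemma glue_add (x x' : Fin (n + 1) → R) (z z' : Fin (m + 1) → R) :
    glue t (x + x') (z + z') = glue t x z + glue t x' z' := by
  funext k
  refine Fin.addCases (m := n + 1) (n := m + 1) (fun i => ?_) (fun j => ?_) k
  · rw [Pi.add_apply]; simp only [glue_left]; rfl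
  · rw [Pi.add_apply]; simp only [glue_right, Pi.add_apply]; ring

lemma glue_last (x : Fin (n + 1) → R) (z : Fin (m + 1) → R) :
    glue t x z (Fin.last (n + 1 + m)) = z (Fin.last m) + x (Fin.last n) := by
  have := glue_right t x z (Fin.last m)
  simpa using this

end

lemma glue_ptc {n m : ℕ} (s : Fin n → ℤ) (t : Fin m → ℤ) (a1 a2 : ℝ) (b1 : Fin n → ℝ)
    (b2 : Fin m → ℝ) :
    glue t (ptc n s a1 b1) (ptc m t a2 b2) =
      ptc (n + 1 + m) (Fin.append (Fin.snoc s 1) t) a2 (Fin.append (Fin.snoc b1 a1) b2) := by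
  funext k
  refine Fin.addCases (m := n + 1) (n := m + 1) (fun i => ?_) (fun j => ?_) k
  · rw [glue_left]
    have e : (Fin.castAdd (m + 1) i : Fin (n + 1 + (m + 1))) = (Fin.castAdd m i).castSucc := rfl
    rw [e, ptc_castSucc, Fin.append_left, Fin.sum_univ_add]
    have h0 : ∀ j : Fin m, ¬ (Fin.natAdd (n + 1) j ≤ Fin.castAdd m i) := by
      intro j; simp only [Fin.le_def, Fin.val_natAdd, Fin.val_castAdd]; omega
    simp only [h0, if_false, Finset.sum_const_zero, add_zero, Fin.append_left]
    refine Fin.lastCases ?_ (fun i => ?_) i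
    · rw [ptc_last, Fin.sum_univ_castSucc]
      have h1 : ∀ j : Fin n, (Fin.castAdd m j.castSucc ≤ Fin.castAdd m (Fin.last n)) := by
        intro j; simp only [Fin.le_def, Fin.val_castAdd, Fin.val_castSucc, Fin.val_last]; omega
      simp [h1, add_comm]
    · rw [ptc_castSucc, Fin.sum_univ_castSucc]
      have h1 : ¬ (Fin.castAdd m (Fin.last n) ≤ Fin.castAdd m i.castSucc) := by
        simp only [Fin.le_def, Fin.val_castAdd, Fin.val_castSucc, Fin.val_last]; omega
      have h2 : ∀ j : Fin n, (Fin.castAdd m j.castSucc ≤ Fin.castAdd m i.castSucc) ↔ j ≤ i := by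
        intro j; simp only [Fin.le_def, Fin.val_castAdd, Fin.val_castSucc]
      simp only [h1, h2, if_false, add_zero, Fin.snoc_castSucc]
  · rw [glue_right, ptc_last]
    refine Fin.lastCases ?_ (fun j => ?_) j
    · have e : (Fin.natAdd (n + 1) (Fin.last m)) = Fin.last (n + 1 + m) := rfl
      rw [e, ptc_last, ptc_last, Fin.sum_univ_add, Fin.sum_univ_castSucc]
      simp
      ring
    · have e : (Fin.natAdd (n + 1) j.castSucc) = (Fin.natAdd (n + 1) j).castSucc := rfl
      rw [e, ptc_castSucc, ptc_castSucc, Fin.sum_univ_add, Fin.sum_univ_castSucc]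
      have h1 : ∀ i : Fin (n + 1), (Fin.castAdd m i ≤ Fin.natAdd (n + 1) j) := by
        intro i; simp only [Fin.le_def, Fin.val_natAdd, Fin.val_castAdd]; omega
      have h2 : ∀ i : Fin m, (Fin.natAdd (n + 1) i ≤ Fin.natAdd (n + 1) j) ↔ i ≤ j := by
        intro i; simp only [Fin.le_def, Fin.val_natAdd]; omega
      simp only [h1, h2, if_true, Fin.append_left, Fin.append_right, Fin.snoc_castSucc,
        Fin.snoc_last]
      ring

lemma mem_cone_iff_s16 (n : ℕ) (s : Fin n → ℤ) (x : Fin (n + 1) → ℝ) :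
    x ∈ lhpCone n s ↔ ∃ (a : ℝ) (b : Fin n → ℝ), 0 ≤ a ∧ (∀ i, 0 ≤ b i) ∧ x = ptc n s a b :=
  Iff.rfl

lemma glue_mem {n m : ℕ} (s : Fin n → ℤ) (t : Fin m → ℤ) (x : Fin (n + 1) → ℝ)
    (z : Fin (m + 1) → ℝ) :
    glue t x z ∈ lhpCone (n + 1 + m) (Fin.append (Fin.snoc s 1) t) ↔
      x ∈ lhpCone n s ∧ z ∈ lhpCone m t := by
  simp only [mem_cone_iff_s16]
  constructor
  · rintro ⟨a, b, ha, hb, h⟩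
    have hb' : b = Fin.append (Fin.snoc (fun i : Fin n => b (Fin.castAdd m i.castSucc))
        (b (Fin.castAdd m (Fin.last n)))) (fun j => b (Fin.natAdd (n + 1) j)) := by
      funext k
      refine Fin.addCases (fun i => ?_) (fun j => ?_) k
      · rw [Fin.append_left]
        refine Fin.lastCases ?_ (fun i => ?_) i <;> simp
      · rw [Fin.append_right]
    rw [hb', ← glue_ptc] at h
    have hA := congrArg partA h
    have hB := congrArg (partB t) h
    rw [partA_glue, partA_glue] at hA
    rw [partB_glue, partB_glue] at hB
    exact ⟨⟨_, _, hb _, fun i => hb _, hA⟩, ⟨_, _, ha, fun i => hb _, hB⟩⟩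
  · rintro ⟨⟨a1, b1, ha1, hb1, rfl⟩, ⟨a2, b2, ha2, hb2, rfl⟩⟩
    refine ⟨a2, _, ha2, ?_, glue_ptc s t a1 a2 b1 b2⟩
    intro k
    refine Fin.addCases (fun i => ?_) (fun j => ?_) k
    · rw [Fin.append_left]
      refine Fin.lastCases ?_ (fun i => ?_) i
      · simpa using ha1
      · simpa using hb1 i
    · rw [Fin.append_right]; exact hb2 j

/-- Gluing as a homeomorphism. -/
def glueHomeo {n m : ℕ} (t : Fin m → ℤ) :
    (Fin (n + 1) → ℝ) × (Fin (m + 1) → ℝ) ≃ₜ (Fin (n + 1 + m + 1) → ℝ) where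
  toFun p := glue t p.1 p.2
  invFun w := (partA w, partB t w)
  left_inv p := by simp [partA_glue, partB_glue]
  right_inv w := glue_part t w
  continuous_toFun := by
    refine continuous_pi fun k => ?_
    refine Fin.addCases (m := n + 1) (n := m + 1) (fun i => ?_) (fun j => ?_) k
    · simp only [glue_left]; fun_prop
    · simp only [glue_right]; fun_prop
  continuous_invFun := by
    unfold partA partB; fun_prop

lemma glue_mem_interior {n m : ℕ} (s : Fin n → ℤ) (t : Fin m → ℤ) (x : Fin (n + 1) → ℝ)
    (z : Fin (m + 1) → ℝ) :
    glue t x z ∈ interior (lhpCone (n + 1 + m) (Fin.append (Fin.snoc s 1) t)) ↔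
      x ∈ interior (lhpCone n s) ∧ z ∈ interior (lhpCone m t) := by
  have h := (glueHomeo (n := n) t).preimage_interior
    (lhpCone (n + 1 + m) (Fin.append (Fin.snoc s 1) t))
  have h2 : (glueHomeo (n := n) t) ⁻¹' (lhpCone (n + 1 + m) (Fin.append (Fin.snoc s 1) t))
      = lhpCone n s ×ˢ lhpCone m t := by
    ext p; exact glue_mem s t p.1 p.2
  rw [h2, interior_prod_eq] at h
  have := Set.ext_iff.1 h (x, z)
  exact this

lemma glue_cast {n m : ℕ} (t : Fin m → ℤ) (x : Fin (n + 1) → ℤ) (z : Fin (m + 1) → ℤ) :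
    (fun i => ((glue t x z i : ℤ) : ℝ)) =
      glue t (fun i => (x i : ℝ)) (fun i => (z i : ℝ)) := by
  funext k
  refine Fin.addCases (m := n + 1) (n := m + 1) (fun i => ?_) (fun j => ?_) k
  · simp only [glue_left]
  · simp only [glue_right]; push_cast; rfl

lemma glueZ_mem {n m : ℕ} (s : Fin n → ℤ) (t : Fin m → ℤ) (x : Fin (n + 1) → ℤ)
    (z : Fin (m + 1) → ℤ) :
    glue t x z ∈ lhpConeZ (n + 1 + m) (Fin.append (Fin.snoc s 1) t) ↔
      x ∈ lhpConeZ n s ∧ z ∈ lhpConeZ m t := by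
  change (fun i => ((glue t x z i : ℤ) : ℝ)) ∈ (_ : Set (Fin (n + 1 + m + 1) → ℝ)) ↔ _
  rw [glue_cast]
  exact glue_mem s t _ _

lemma glueZ_mem_interior {n m : ℕ} (s : Fin n → ℤ) (t : Fin m → ℤ) (x : Fin (n + 1) → ℤ)
    (z : Fin (m + 1) → ℤ) :
    glue t x z ∈ lhpConeInteriorZ (n + 1 + m) (Fin.append (Fin.snoc s 1) t) ↔
      x ∈ lhpConeInteriorZ n s ∧ z ∈ lhpConeInteriorZ m t := by
  change (fun i => ((glue t x z i : ℤ) : ℝ)) ∈ (_ : Set (Fin (n + 1 + m + 1) → ℝ)) ↔ _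
  rw [glue_cast]
  exact glue_mem_interior s t _ _

end

theorem lhp_level_append (n m : ℕ) (s : Fin n → ℤ) (t : Fin m → ℤ)
    (hs : ∀ i, 0 < s i) (ht : ∀ i, 0 < t i)
    (h₁ : IsLevel n s) (h₂ : IsLevel m t) :
    IsLevel (n + 1 + m) (Fin.append (Fin.snoc s 1) t) := by
  classical
  obtain ⟨C, hC, hC1, hC2⟩ := h₁
  obtain ⟨D, hD, hD1, hD2⟩ := h₂
  refine ⟨(C ×ˢ D).image (fun p => glue t p.1 p.2), (hC.product hD).image _, ?_, ?_⟩
  · intro c hc c' hc'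
    obtain ⟨p, hp, rfl⟩ := Finset.mem_image.1 hc
    obtain ⟨q, hq, rfl⟩ := Finset.mem_image.1 hc'
    rw [Finset.mem_product] at hp hq
    simp only [glue_last]
    rw [hC1 _ hp.1 _ hq.1, hD1 _ hp.2 _ hq.2]
  · ext w
    obtain ⟨x, z, rfl⟩ : ∃ x z, w = glue t x z := ⟨_, _, (glue_part (n := n) t w).symm⟩
    rw [glueZ_mem_interior, ← hC2, ← hD2]
    simp only [Set.mem_iUnion, Set.mem_image, exists_prop]
    constructor
    · rintro ⟨c, hc, y, hy, h⟩
      obtain ⟨p, hp, rfl⟩ := Finset.mem_image.1 hc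
      rw [Finset.mem_product] at hp
      rw [← glue_part (n := n) t y] at hy h
      rw [glueZ_mem] at hy
      rw [← glue_add] at h
      have hA := congrArg partA h
      have hB := congrArg (partB t) h
      rw [partA_glue, partA_glue] at hA
      rw [partB_glue, partB_glue] at hB
      exact ⟨⟨_, hp.1, _, hy.1, hA⟩, ⟨_, hp.2, _, hy.2, hB⟩⟩
    · rintro ⟨⟨c, hc, y, hy, rfl⟩, ⟨d, hd, y', hy', rfl⟩⟩
      refine ⟨glue t c d, Finset.mem_image.2 ⟨(c, d), Finset.mem_product.2 ⟨hc, hd⟩, rfl⟩,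
        glue t y y', (glueZ_mem s t y y').2 ⟨hy, hy'⟩, (glue_add t _ _ _ _).symm⟩
end
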